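/- arXiv:1607.04128 — 11 statements merged into one kernel-verified Lean document; each statement's English description precedes it below -/
import Mathlib

section
/- There exists a complete lattice Z such that the binary supremum function (z, z') ↦ z ⊔ z' from Z × Z to Z is not continuous when Z × Z carries the product topology of the Scott topology on each copy of Z and Z carries the Scott topology. -/
/-- The property that the binary supremum function on a complete lattice `Z` is *not*
continuous from `Z × Z` (with the product topology of the Scott topology on each copy of `Z`)
to `Z` (with the Scott topology). -/
def SupDiscontinuousProdScott (Z : Type) [CompleteLattice Z] : Prop :=
  letI : TopologicalSpace Z := Topology.scott Z Set.univ
  ¬ Continuous (fun p : Z × Z => p.1 ⊔ p.2)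

/-!
If `⊔` is jointly continuous on `X × Y`, then `(x, y) = (x, ⊥) ⊔ (⊥, y)` depends continuously on
`x` and `y`, so every Scott closed subset of `X × Y` is closed for the product of the Scott
topologies. For `Y = Xᵒᵈ`, the relation `x ≤ y` is Scott closed. It is not closed for the product
topology when `X` consists of the sequences of natural numbers together with a top and a bottom:
a neighbourhood of `⊤` contains, for each `n`, the sequence with some value `f n` at `n` and `0`
elsewhere, while a neighbourhood of `0` in `Xᵒᵈ` contains, for some `N`, the sequence `f` set to
`0` before `N`, and the latter dominates the former for `n = N`.
-/

open Filter Set Topology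
open Topology.WithScott (ofScott toScott)
open OrderDual (ofDual toDual)

section ScottTopology

theorem continuous_withScott_of_scottContinuous {α β : Type*} [Preorder α] [Preorder β]
    {f : α → β} (hf : ScottContinuous f) :
    Continuous fun x : WithScott α ↦ toScott (f (ofScott x)) :=
  (IsScott.scottContinuousOn_iff_continuous fun _ _ _ ↦ mem_univ _).1 hf.scottContinuousOn

theorem tendsto_atTop_withScott_of_isLUB {α ι : Type*} [Preorder α] [Preorder ι]
    [IsDirectedOrder ι] [Nonempty ι] {c : ι → α} {a : α} (hc : Monotone c)
    (ha : IsLUB (range c) a) : Tendsto (fun i ↦ toScott (c i)) atTop (𝓝 (toScott a)) := by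
  refine tendsto_nhds.2 fun U hU haU ↦ ?_
  obtain ⟨hUpper, hInacc⟩ :=
    (IsScott.isOpen_iff_isUpperSet_and_dirSupInaccOn (D := univ)).1 hU
  obtain ⟨_, ⟨i, rfl⟩, hi⟩ := hInacc (mem_univ (range c)) (range_nonempty c)
    (directedOn_range.2 hc.directed_le) ha haU
  filter_upwards [Ici_mem_atTop i] with j hij
  exact hUpper (hc hij) hi

theorem continuous_prodMk_withScott_of_continuous_sup {X Y : Type*} [SemilatticeSup X]
    [OrderBot X] [SemilatticeSup Y] [OrderBot Y]
    (hsup : Continuous fun p : WithScott (X × Y) × WithScott (X × Y) ↦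
      toScott (ofScott p.1 ⊔ ofScott p.2)) :
    Continuous fun p : WithScott X × WithScott Y ↦ toScott (ofScott p.1, ofScott p.2) := by
  have hleft : Continuous fun x : WithScott X ↦ toScott (ofScott x, (⊥ : Y)) :=
    continuous_withScott_of_scottContinuous (.prodMk .id (.const ⊥))
  have hright : Continuous fun y : WithScott Y ↦ toScott ((⊥ : X), ofScott y) :=
    continuous_withScott_of_scottContinuous (.prodMk (.const ⊥) .id)
  have hprod := hsup.comp (hleft.prodMap hright)
  simpa [Function.comp_def] using hprod

end ScottTopology

section OrderRelation

theorem dirSupClosed_setOf_fst_le_snd (X : Type*) [Preorder X] :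
    DirSupClosed {p : X × Xᵒᵈ | p.1 ≤ ofDual p.2} := by
  rintro D hD - hdir ⟨a, b⟩ hab
  obtain ⟨ha, hb⟩ := isLUB_prod.1 hab
  have hcross : ∀ d ∈ D, ∀ e ∈ D, d.1 ≤ ofDual e.2 := by
    intro d hd e he
    obtain ⟨z, hz, hdz, hez⟩ := hdir d hd e he
    exact hdz.1.trans ((hD hz).trans hez.2)
  refine ha.2 (forall_mem_image.2 fun d hd ↦ ?_)
  have hbd : b ≤ toDual d.1 := hb.2 (forall_mem_image.2 fun e he ↦ hcross d hd e he)
  exact hbd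

theorem isLowerSet_setOf_fst_le_snd (X : Type*) [Preorder X] :
    IsLowerSet {p : X × Xᵒᵈ | p.1 ≤ ofDual p.2} :=
  fun _ _ hqp hp ↦ hqp.1.trans (le_trans hp hqp.2)

theorem isClosed_withScott_setOf_fst_le_snd (X : Type*) [Preorder X] :
    IsClosed {p : WithScott (X × Xᵒᵈ) | (ofScott p).1 ≤ ofDual (ofScott p).2} :=
  IsScott.isClosed_iff_isLowerSet_and_dirSupClosed.2
    ⟨isLowerSet_setOf_fst_le_snd X, dirSupClosed_setOf_fst_le_snd X⟩

theorem isClosed_setOf_le_of_continuous_sup {X : Type*} [Lattice X] [BoundedOrder X]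
    (hsup : Continuous fun p : WithScott (X × Xᵒᵈ) × WithScott (X × Xᵒᵈ) ↦
      toScott (ofScott p.1 ⊔ ofScott p.2)) :
    IsClosed {p : WithScott X × WithScott Xᵒᵈ | ofScott p.1 ≤ ofDual (ofScott p.2)} :=
  (isClosed_withScott_setOf_fst_le_snd X).preimage
    (continuous_prodMk_withScott_of_continuous_sup hsup)

end OrderRelation

section WithTopWithBot

variable {α ι : Type*} [Preorder α] {c : ι → α}

theorem isLUB_range_coe_coe_top [Nonempty ι] (hc : ¬BddAbove (range c)) :
    IsLUB (range fun i ↦ ((c i : WithBot α) : WithTop (WithBot α))) ⊤ := by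
  refine ⟨fun _ _ ↦ le_top, fun u hu ↦ ?_⟩
  induction u with
  | top => exact le_rfl
  | coe v =>
    have hv : ∀ i, (c i : WithBot α) ≤ v := fun i ↦ WithTop.coe_le_coe.1 (hu (mem_range_self i))
    induction v with
    | bot => exact absurd (hv (Classical.arbitrary ι)) (WithBot.not_coe_le_bot _)
    | coe b => exact absurd ⟨b, forall_mem_range.2 fun i ↦ WithBot.coe_le_coe.1 (hv i)⟩ hc

theorem isGLB_range_coe_coe [Nonempty ι] {a : α} (hc : IsGLB (range c) a) :
    IsGLB (range fun i ↦ ((c i : WithBot α) : WithTop (WithBot α))) ((a : WithBot α)) := by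
  refine ⟨forall_mem_range.2 fun i ↦ ?_, fun u hu ↦ ?_⟩
  · exact WithTop.coe_le_coe.2 (WithBot.coe_le_coe.2 (hc.1 (mem_range_self i)))
  · induction u with
    | top => exact absurd (hu (mem_range_self (Classical.arbitrary ι))) (WithTop.not_top_le_coe _)
    | coe v =>
      induction v with
      | bot => exact WithTop.coe_le_coe.2 bot_le
      | coe b =>
        refine WithTop.coe_le_coe.2 (WithBot.coe_le_coe.2 (hc.2 (forall_mem_range.2 fun i ↦ ?_)))
        exact WithBot.coe_le_coe.1 (WithTop.coe_le_coe.1 (hu (mem_range_self i)))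

end WithTopWithBot

section SingleIndicator

variable {α M : Type*} [Preorder M] [Zero M]

theorem not_bddAbove_range_single [DecidableEq α] [NoMaxOrder M] (a : α) :
    ¬BddAbove (range fun m ↦ (Pi.single a m : α → M)) := by
  rintro ⟨g, hg⟩
  obtain ⟨m, hm⟩ := exists_gt (g a)
  have hle : (Pi.single a m : α → M) a ≤ g a := hg (mem_range_self m) a
  rw [Pi.single_eq_same] at hle
  exact hle.not_gt hm

variable [Preorder α] {f : α → M}

theorem antitone_indicator_Ici (hf : 0 ≤ f) : Antitone fun a ↦ (Ici a).indicator f :=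
  fun _ _ hab ↦ indicator_le_indicator_of_subset (Ici_subset_Ici.2 hab) hf

theorem single_le_indicator_Ici [DecidableEq α] (hf : 0 ≤ f) (a : α) :
    Pi.single a (f a) ≤ (Ici a).indicator f := by
  rw [← indicator_singleton]
  exact indicator_le_indicator_of_subset (singleton_subset_iff.2 self_mem_Ici) hf

theorem isGLB_range_indicator_Ici [NoMaxOrder α] (hf : 0 ≤ f) :
    IsGLB (range fun a ↦ (Ici a).indicator f) 0 := by
  refine ⟨forall_mem_range.2 fun _ ↦ indicator_nonneg fun x _ ↦ hf x, fun g hg a ↦ ?_⟩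
  obtain ⟨b, hab⟩ := exists_gt a
  have hle : g a ≤ (Ici b).indicator f a := hg (mem_range_self b) a
  rwa [indicator_of_notMem (show a ∉ Ici b from hab.not_ge)] at hle

end SingleIndicator

section Sequences

/-- The complete lattice of sequences of natural numbers, ordered pointwise, with a least and a
greatest element adjoined. It contains unbounded chains supported on a single index whose supremum
is `⊤`. -/
abbrev ExtendedSeq : Type := WithTop (WithBot (ℕ → ℕ))

theorem not_isClosed_setOf_extendedSeq_le :
    ¬IsClosed {p : WithScott ExtendedSeq × WithScott ExtendedSeqᵒᵈ |
      ofScott p.1 ≤ ofDual (ofScott p.2)} := by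
  intro hclosed
  let emb (g : ℕ → ℕ) : ExtendedSeq := ((g : WithBot (ℕ → ℕ)) : ExtendedSeq)
  have hemb : Monotone emb := fun _ _ h ↦ WithTop.coe_le_coe.2 (WithBot.coe_le_coe.2 h)
  have hsingle (n : ℕ) : Tendsto (fun k ↦ toScott (emb (Pi.single n k))) atTop (𝓝 (toScott ⊤)) :=
    tendsto_atTop_withScott_of_isLUB (hemb.comp (Pi.single_mono n))
      (isLUB_range_coe_coe_top (not_bddAbove_range_single n))
  have htail (f : ℕ → ℕ) : Tendsto (fun N ↦ toScott (toDual (emb ((Ici N).indicator f)))) atTop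
      (𝓝 (toScott (toDual (emb 0)))) :=
    tendsto_atTop_withScott_of_isLUB
      (hemb.comp_antitone (antitone_indicator_Ici zero_le)).dual_right
      (isGLB_range_coe_coe (isGLB_range_indicator_Ici zero_le))
  have hmem : (toScott ⊤, toScott (toDual (emb 0))) ∈
      {p : WithScott ExtendedSeq × WithScott ExtendedSeqᵒᵈ |
        ofScott p.1 ≤ ofDual (ofScott p.2)}ᶜ := WithTop.not_top_le_coe _
  obtain ⟨A, hA, B, hB, hAB⟩ := mem_nhds_prod_iff.1 (hclosed.isOpen_compl.mem_nhds hmem)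
  choose f hf using fun n ↦ ((hsingle n).eventually_mem hA).exists
  obtain ⟨N, hN⟩ := ((htail f).eventually_mem hB).exists
  exact hAB (mk_mem_prod (hf N) hN) (hemb (single_le_indicator_Ici zero_le N))

end Sequences

/-- There exists a complete lattice `Z` such that the binary supremum function
`(z, z') ↦ z ⊔ z'` from `Z × Z` to `Z` is not continuous when `Z × Z` carries the product
topology of the Scott topology on each copy of `Z` and `Z` carries the Scott topology. -/
theorem stmt_0 : ∃ (Z : Type) (cZ : CompleteLattice Z), @SupDiscontinuousProdScott Z cZ := by
  refine ⟨ExtendedSeq × ExtendedSeqᵒᵈ, inferInstance, fun hsup ↦ ?_⟩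
  exact not_isClosed_setOf_extendedSeq_le (isClosed_setOf_le_of_continuous_sup hsup)
end

section
/- There exist a topological space X, a complete lattice Z, and two functions f, g : X → Z, each continuous with respect to the topology on X and the Scott topology on Z, such that the set {f, g} has no least upper bound in the partially ordered set of all continuous functions from X to Z (with Scott topology on Z) ordered pointwise; in particular the poset of such continuous functions is not bounded complete. -/
/-- On `X` a topological space and `Z` a complete lattice with the Scott topology:
there exist continuous `f g : X → Z` such that `{f, g}` has no least upper bound in the
pointwise-ordered poset of continuous functions, and that poset is not bounded complete. -/
def NoLubOfPairAndNotBoundedComplete (X Z : Type) [TopologicalSpace X] [CompleteLattice Z] :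
    Prop :=
  letI : TopologicalSpace Z := Topology.scott Z Set.univ
  ∃ f g : X → Z, Continuous f ∧ Continuous g ∧
    -- the set {f, g} has no least upper bound in the poset of continuous functions,
    -- ordered pointwise
    (¬ ∃ h : X → Z, Continuous h ∧ f ≤ h ∧ g ≤ h ∧
        ∀ k : X → Z, Continuous k → f ≤ k → g ≤ k → h ≤ k) ∧
    -- in particular, the poset of continuous functions is not bounded complete
    ¬ (∀ F : Set (X → Z), (∀ j ∈ F, Continuous j) →
        (∃ b : X → Z, Continuous b ∧ ∀ j ∈ F, j ≤ b) →
        ∃ s : X → Z, Continuous s ∧ (∀ j ∈ F, j ≤ s) ∧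
          ∀ b : X → Z, Continuous b → (∀ j ∈ F, j ≤ b) → s ≤ b)

/-!
In a complete lattice `Z` with its Scott topology, each map equal to `z` on a closed set and to `⊤`
elsewhere is continuous. Such maps squeeze an upper bound of the two projections `Z × Z → Z`: if
these have a least upper bound among the continuous maps (for the product topology on `Z × Z`), it
is the binary supremum. So it suffices to find `Z` whose supremum is not jointly continuous.

For `Z = P × Q` joint continuity of the supremum would make every Scott open subset of `P × Q` open
in the product of the Scott topologies, because `(p, q) = (p, ⊥) ⊔ (⊥, q)`. This fails when `P` and
`Q` consist of the functions `(ℕ → ℕ) → ℕ` and `ℕ → ℕ`, respectively, with a top adjoined. There the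
multiples of any single indicator function have supremum `⊤`, so a product neighbourhood of `(⊤, ⊤)`
amounts to bounds `φ i` and `ψ j`, and Cantor's diagonal argument yields a function `i : ℕ → ℕ` and
`j : ℕ` with `max (φ i) (ψ j) < i j`.
-/

open Set Topology

section JointContinuity

variable {Z : Type*} [TopologicalSpace Z]

theorem continuous_ite_mem_top [Preorder Z] [OrderTop Z] [IsScott Z univ] {X : Type*}
    [TopologicalSpace X] {C : Set X} [DecidablePred (· ∈ C)] (hC : IsClosed C) (z : Z) :
    Continuous fun x ↦ if x ∈ C then z else ⊤ := by
  refine continuous_def.2 fun V hV ↦ ?_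
  have hV_upper : IsUpperSet V := IsScott.isUpperSet_of_isOpen (D := univ) hV
  by_cases hz : z ∈ V
  · have htop : ⊤ ∈ V := hV_upper le_top hz
    convert isOpen_univ
    grind
  · by_cases htop : ⊤ ∈ V
    · convert hC.isOpen_compl
      grind
    · convert isOpen_empty
      grind

theorem continuousSup_of_isLUB_fst_snd [SemilatticeSup Z] [OrderTop Z] [IsScott Z univ]
    {h : C(Z × Z, Z)} (hh : IsLUB {ContinuousMap.fst, ContinuousMap.snd} h) : ContinuousSup Z := by
  classical
  have h_eq_sup (p : Z × Z) : h p = p.1 ⊔ p.2 := by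
    refine le_antisymm ?_ (sup_le (hh.1 (mem_insert _ _) p) (hh.1 (mem_insert_of_mem _ rfl) p))
    let k : C(Z × Z, Z) :=
      ⟨fun q ↦ if q ∈ Iic p.1 ×ˢ Iic p.2 then p.1 ⊔ p.2 else ⊤,
        continuous_ite_mem_top (isClosed_Iic.prod isClosed_Iic) _⟩
    have sup_le_k (q : Z × Z) : q.1 ⊔ q.2 ≤ k q := by
      by_cases hq : q ≤ p
      · simpa [k, hq] using sup_le_sup hq.1 hq.2
      · simp [k, hq]
    have hk : k ∈ upperBounds {ContinuousMap.fst, ContinuousMap.snd} := by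
      rintro f (rfl | rfl) q
      exacts [le_sup_left.trans (sup_le_k q), le_sup_right.trans (sup_le_k q)]
    simpa [k] using hh.2 hk p
  exact ⟨h.continuous.congr h_eq_sup⟩

theorem noLubOfPairAndNotBoundedComplete_of_not_continuousSup {Z : Type} [CompleteLattice Z]
    [TopologicalSpace Z] [IsScott Z univ] (hZ : ¬ ContinuousSup Z) :
    NoLubOfPairAndNotBoundedComplete (Z × Z) Z := by
  rw [NoLubOfPairAndNotBoundedComplete, ← IsScott.topology_eq Z univ]
  have no_lub : ¬ ∃ h : Z × Z → Z, Continuous h ∧ Prod.fst ≤ h ∧ Prod.snd ≤ h ∧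
      ∀ k : Z × Z → Z, Continuous k → Prod.fst ≤ k → Prod.snd ≤ k → h ≤ k := by
    rintro ⟨h, h_cont, h_fst, h_snd, h_least⟩
    refine hZ (continuousSup_of_isLUB_fst_snd (h := ⟨h, h_cont⟩) ⟨?_, fun k hk ↦ ?_⟩)
    · rintro f (rfl | rfl)
      exacts [h_fst, h_snd]
    · exact h_least k k.continuous (hk (mem_insert _ _)) (hk (mem_insert_of_mem _ rfl))
  refine ⟨Prod.fst, Prod.snd, continuous_fst, continuous_snd, no_lub, fun bounded_complete ↦ ?_⟩
  obtain ⟨h, h_cont, h_upper, h_least⟩ := bounded_complete {Prod.fst, Prod.snd}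
    (by rintro f (rfl | rfl); exacts [continuous_fst, continuous_snd])
    ⟨fun _ ↦ ⊤, continuous_const, fun _ _ _ ↦ le_top⟩
  refine no_lub ⟨h, h_cont, h_upper _ (by simp), h_upper _ (by simp), fun k hk k_fst k_snd ↦ ?_⟩
  exact h_least k hk (by rintro f (rfl | rfl); exacts [k_fst, k_snd])

end JointContinuity

section ScottProd

variable {P Q : Type*} [TopologicalSpace P] [TopologicalSpace Q]

theorem continuous_of_scottContinuous [Preorder P] [Preorder Q] [IsScott P univ] [IsScott Q univ]
    {f : P → Q} (hf : ScottContinuous f) : Continuous f :=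
  (IsScott.scottContinuousOn_iff_continuous fun _ _ _ ↦ mem_univ _).1
    (scottContinuousOn_univ.2 hf)

theorem isOpen_scott_prod_of_isOpen_slices [Preorder P] [Preorder Q] [IsScott P univ]
    [IsScott Q univ] {U : Set (P × Q)} (hP : ∀ q, IsOpen {p | (p, q) ∈ U})
    (hQ : ∀ p, IsOpen {q | (p, q) ∈ U}) : IsOpen[scott (P × Q) univ] U := by
  let := scott (P × Q) univ
  have : IsScott (P × Q) univ := ⟨rfl⟩
  exact IsScott.isOpen_iff_scottContinuous_mem.2 <| .fromProd
    (fun p ↦ IsScott.isOpen_iff_scottContinuous_mem.1 (hQ p))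
    (fun q ↦ IsScott.isOpen_iff_scottContinuous_mem.1 (hP q))

variable [SemilatticeSup P] [OrderBot P] [SemilatticeSup Q] [OrderBot Q]
variable [IsScott P univ] [IsScott Q univ]

theorem continuous_supHom_prod_of_scottContinuous {Z : Type*} [SemilatticeSup Z]
    [TopologicalSpace Z] [IsScott Z univ] [ContinuousSup Z] (f : SupHom (P × Q) Z)
    (hf : ScottContinuous f) : Continuous f := by
  have left_cont : Continuous fun p : P ↦ f (p, ⊥) :=
    continuous_of_scottContinuous (.comp (.prodMk .id (.const ⊥)) hf)
  have right_cont : Continuous fun q : Q ↦ f (⊥, q) :=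
    continuous_of_scottContinuous (.comp (.prodMk (.const ⊥) .id) hf)
  have f_eq_sup (x : P × Q) : f (x.1, ⊥) ⊔ f (⊥, x.2) = f x := by
    rw [← map_sup, Prod.mk_sup_mk, sup_bot_eq, bot_sup_eq]
  exact ((left_cont.comp continuous_fst).sup (right_cont.comp continuous_snd)).congr f_eq_sup

theorem prod_le_scott_of_continuousSup (h : @ContinuousSup (P × Q) (scott (P × Q) univ) _) :
    instTopologicalSpaceProd ≤ scott (P × Q) univ :=
  continuous_id_iff_le.1 <| @continuous_supHom_prod_of_scottContinuous P Q _ _ _ _ _ _ _ _ (P × Q) _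
    (scott (P × Q) univ) (@IsScott.mk _ _ _ (_) rfl) h (SupHom.id _) .id

end ScottProd

/-- The complete lattice obtained by adjoining a top to a conditionally complete lattice with a
bottom. Its binary suprema and infima are those of `WithTop.lattice`. -/
noncomputable abbrev completeLatticeWithTop (α : Type*) [ConditionallyCompleteLattice α]
    [OrderBot α] : CompleteLattice (WithTop α) where
  __ := WithTop.lattice
  __ := completeLatticeOfInf (WithTop α) fun _ ↦ WithTop.isGLB_sInf' (OrderBot.bddBelow _)

section Spike

variable {I J : Type*} [DecidableEq I] [DecidableEq J]

/-- The function on `I` supported at `i` with value `n + 1` there, as an element of the lattice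
`WithTop (I → ℕ)`. The shift makes it nonzero for every `n`. -/
def spike (i : I) (n : ℕ) : WithTop (I → ℕ) :=
  ((Pi.single i (n + 1) : I → ℕ) : WithTop (I → ℕ))

theorem spike_le_coe {i : I} {n : ℕ} {f : I → ℕ} : spike i n ≤ f ↔ n < f i := by
  simp only [spike, WithTop.coe_le_coe, Pi.le_def, Pi.single_apply]
  grind

theorem spike_le_spike {i j : I} {n m : ℕ} : spike i n ≤ spike j m ↔ i = j ∧ n ≤ m :=
  spike_le_coe.trans (by grind)

theorem le_coe_iff_forall_spike_le [Nonempty I] {p : WithTop (I → ℕ)} {f : I → ℕ} :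
    p ≤ f ↔ ∀ i n, spike i n ≤ p → n < f i := by
  refine ⟨fun h i n hn ↦ spike_le_coe.1 (hn.trans h), fun h ↦ ?_⟩
  induction p with
  | top =>
    obtain ⟨i⟩ := ‹Nonempty I›
    exact absurd (h i (f i) le_top) (lt_irrefl _)
  | coe g => exact WithTop.coe_le_coe.2 fun i ↦ le_of_forall_lt fun n hn ↦ h i n (spike_le_coe.2 hn)

theorem isLUB_range_spike (i : I) : IsLUB (range (spike i)) ⊤ := by
  refine ⟨fun _ _ ↦ le_top, fun u hu ↦ ?_⟩
  induction u with
  | top => exact le_rfl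
  | coe f => exact absurd (spike_le_coe.1 (hu ⟨f i, rfl⟩)) (lt_irrefl _)

theorem exists_spike_mem_of_isOpen [TopologicalSpace (WithTop (I → ℕ))]
    [IsScott (WithTop (I → ℕ)) univ] {V : Set (WithTop (I → ℕ))} (hV : IsOpen V) (htop : ⊤ ∈ V)
    (i : I) : ∃ n, spike i n ∈ V := by
  have spike_mono : Monotone (spike i) := fun _ _ h ↦ spike_le_spike.2 ⟨rfl, h⟩
  obtain ⟨_, ⟨n, rfl⟩, hn⟩ := (IsScott.isOpen_iff_isUpperSet_and_dirSupInaccOn (D := univ).1 hV).2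
    (mem_univ _) (range_nonempty _) (directedOn_range.2 spike_mono.directed_le)
    (isLUB_range_spike i) htop
  exact ⟨n, hn⟩

theorem isOpen_exists_spike_le [Nonempty I] [TopologicalSpace (WithTop (I → ℕ))]
    [IsScott (WithTop (I → ℕ)) univ] (b : I → ℕ) :
    IsOpen {p | ∃ i n, spike i n ≤ p ∧ b i ≤ n} := by
  convert (isClosed_Iic (a := (b : WithTop (I → ℕ)))).isOpen_compl using 1
  ext p
  simp [le_coe_iff_forall_spike_le]

/-- The upper set of `WithTop (I → ℕ) × WithTop (J → ℕ)` generated by the pairs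
`(spike i n, spike j m)` with `a i j ≤ max n m`. It is Scott open, but is a product neighbourhood of
`(⊤, ⊤)` only if `a i j ≤ max (φ i) (ψ j)` for some `φ` and `ψ`. -/
def spikePairs (a : I → J → ℕ) : Set (WithTop (I → ℕ) × WithTop (J → ℕ)) :=
  {z | ∃ i j n m, spike i n ≤ z.1 ∧ spike j m ≤ z.2 ∧ a i j ≤ max n m}

theorem spike_mk_spike_mem_spikePairs {a : I → J → ℕ} {i : I} {j : J} {n m : ℕ} :
    (spike i n, spike j m) ∈ spikePairs a ↔ a i j ≤ max n m := by
  simp only [spikePairs, mem_ofPred_eq, spike_le_spike]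
  grind

theorem swap_mem_spikePairs_flip {a : I → J → ℕ} {z : WithTop (I → ℕ) × WithTop (J → ℕ)} :
    z.swap ∈ spikePairs (flip a) ↔ z ∈ spikePairs a := by
  simp only [spikePairs, mem_ofPred_eq, flip, Prod.fst_swap, Prod.snd_swap]
  grind

theorem isOpen_fst_slice_spikePairs [Nonempty I] [TopologicalSpace (WithTop (I → ℕ))]
    [IsScott (WithTop (I → ℕ)) univ] (a : I → J → ℕ) (q : WithTop (J → ℕ)) :
    IsOpen {p | (p, q) ∈ spikePairs a} := by
  have slice_eq : {p | (p, q) ∈ spikePairs a} = ⋃ (j) (m) (_ : spike j m ≤ q),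
      {p | ∃ i n, spike i n ≤ p ∧ (if a i j ≤ m then 0 else a i j) ≤ n} := by
    ext p
    simp only [spikePairs, mem_ofPred_eq, mem_iUnion]
    grind
  rw [slice_eq]
  exact isOpen_iUnion fun j ↦ isOpen_iUnion fun m ↦ isOpen_iUnion fun _ ↦ isOpen_exists_spike_le _

theorem isOpen_scott_spikePairs [Nonempty I] [Nonempty J] (a : I → J → ℕ) :
    IsOpen[scott (WithTop (I → ℕ) × WithTop (J → ℕ)) univ] (spikePairs a) := by
  let := scott (WithTop (I → ℕ)) univ
  let := scott (WithTop (J → ℕ)) univ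
  have : IsScott (WithTop (I → ℕ)) univ := ⟨rfl⟩
  have : IsScott (WithTop (J → ℕ)) univ := ⟨rfl⟩
  refine isOpen_scott_prod_of_isOpen_slices (isOpen_fst_slice_spikePairs a) fun p ↦ ?_
  simpa only [← swap_mem_spikePairs_flip (a := a), Prod.swap_prod_mk]
    using isOpen_fst_slice_spikePairs (flip a) p

theorem exists_le_max_of_isOpen_spikePairs [Nonempty I] [Nonempty J]
    [TopologicalSpace (WithTop (I → ℕ))] [IsScott (WithTop (I → ℕ)) univ]
    [TopologicalSpace (WithTop (J → ℕ))] [IsScott (WithTop (J → ℕ)) univ] {a : I → J → ℕ}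
    (ha : IsOpen (spikePairs a)) : ∃ (φ : I → ℕ) (ψ : J → ℕ), ∀ i j, a i j ≤ max (φ i) (ψ j) := by
  have top_mem : (⊤, ⊤) ∈ spikePairs a := by
    obtain ⟨i⟩ := ‹Nonempty I›
    obtain ⟨j⟩ := ‹Nonempty J›
    exact ⟨i, j, a i j, 0, le_top, le_top, le_max_left _ _⟩
  obtain ⟨V, W, hV, hW, hV_top, hW_top, hVW⟩ := isOpen_prod_iff.1 ha _ _ top_mem
  choose φ hφ using exists_spike_mem_of_isOpen hV hV_top
  choose ψ hψ using exists_spike_mem_of_isOpen hW hW_top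
  exact ⟨φ, ψ, fun i j ↦ spike_mk_spike_mem_spikePairs.1 (hVW ⟨hφ i, hψ j⟩)⟩

end Spike

theorem exists_max_lt_apply (φ : (ℕ → ℕ) → ℕ) (ψ : ℕ → ℕ) :
    ∃ i j, max (φ i) (ψ j) < i j := by
  let i : ℕ → ℕ := fun j ↦ j + ψ j + 1
  exact ⟨i, φ i, by simp only [i]; omega⟩

theorem not_continuousSup_scott_withTop_prod :
    ¬ @ContinuousSup (WithTop ((ℕ → ℕ) → ℕ) × WithTop (ℕ → ℕ)) (scott _ univ) _ := by
  classical
  let := scott (WithTop ((ℕ → ℕ) → ℕ)) univ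
  let := scott (WithTop (ℕ → ℕ)) univ
  have : IsScott (WithTop ((ℕ → ℕ) → ℕ)) univ := ⟨rfl⟩
  have : IsScott (WithTop (ℕ → ℕ)) univ := ⟨rfl⟩
  intro h
  obtain ⟨φ, ψ, le_max⟩ := exists_le_max_of_isOpen_spikePairs (a := fun (i : ℕ → ℕ) j ↦ i j)
    (prod_le_scott_of_continuousSup h _ (isOpen_scott_spikePairs _))
  obtain ⟨i, j, max_lt⟩ := exists_max_lt_apply φ ψ
  exact (le_max i j).not_gt max_lt

/-- There exist a topological space `X`, a complete lattice `Z`, and continuous functions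
`f, g : X → Z` (with the Scott topology on `Z`) such that `{f, g}` has no least upper bound
in the pointwise-ordered poset of continuous functions from `X` to `Z`; in particular this
poset is not bounded complete. -/
theorem stmt_1 : ∃ (X Z : Type) (tX : TopologicalSpace X) (cZ : CompleteLattice Z),
    @NoLubOfPairAndNotBoundedComplete X Z tX cZ := by
  let := completeLatticeWithTop ((ℕ → ℕ) → ℕ)
  let := completeLatticeWithTop (ℕ → ℕ)
  let Z := WithTop ((ℕ → ℕ) → ℕ) × WithTop (ℕ → ℕ)
  let : TopologicalSpace Z := scott Z univ
  have : IsScott Z univ := ⟨rfl⟩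
  exact ⟨Z × Z, Z, inferInstance, inferInstance,
    noLubOfPairAndNotBoundedComplete_of_not_continuousSup
      not_continuousSup_scott_withTop_prod⟩
end

section
/- There exist a topological space X, a complete lattice Z, and two functions f, g : X → Z, each continuous with respect to the topology on X and the Scott topology on Z, such that the pointwise supremum h : X → Z defined by h(x) = f(x) ⊔ g(x) is not continuous with respect to the topology on X and the Scott topology on Z. -/
/-- On `X` a topological space and `Z` a complete lattice with the Scott topology:
there exist continuous `f g : X → Z` whose pointwise supremum is not continuous. -/
def PointwiseSupDiscontinuous (X Z : Type) [TopologicalSpace X] [CompleteLattice Z] : Prop :=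
  letI : TopologicalSpace Z := Topology.scott Z Set.univ
  ∃ f g : X → Z, Continuous f ∧ Continuous g ∧ ¬ Continuous (fun x => f x ⊔ g x)

/-!
For complete lattices `A` and `B`, the maps `(a, b) ↦ (a, ⊥)` and `(a, b) ↦ (⊥, b)` are continuous
from the product of the Scott topologies to the Scott topology of `A × B`, and their pointwise
supremum is the identity. So it suffices that the Scott topology of `A × B` be strictly finer than
the product topology. Scott openness in `A × B` can be tested in each variable separately, and this
is weaker than openness in the product: take for `A` and `B` the fans of infinite chains indexed by
`ℕ` and by `ℕ → ℕ`, all chains converging to `⊤`, and relate the `m`-th point of the chain `n` to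
the `k`-th point of the chain `φ` when `n < k` or `φ n < m`. A product neighbourhood `V × W` of
`(⊤, ⊤)` contains, for some `φ`, the `φ n`-th point of every chain `n`, and then, for some `k`, the
`k`-th point of the chain `φ`; but this point is not related to the `φ k`-th point of the chain `k`.
-/

open Set Topology

theorem exists_isLUB_of_le_or_le_or_disjoint {α : Type*} [PartialOrder α] [BoundedOrder α]
    [WellFoundedLT α] (h : ∀ a b : α, a ≤ b ∨ b ≤ a ∨ Disjoint a b) (s : Set α) :
    ∃ a, IsLUB s a := by
  obtain ⟨a, ha⟩ := exists_minimal_of_wellFoundedLT (· ∈ upperBounds s) ⟨⊤, fun x _ => le_top⟩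
  refine ⟨a, ha.prop, fun b hb => ?_⟩
  rcases h a b with hab | hba | hdisj
  · exact hab
  · exact ha.le_of_le hb hba
  · have bot_mem : ⊥ ∈ upperBounds s := fun x hx => hdisj (ha.prop hx) (hb hx)
    exact (ha.le_of_le bot_mem bot_le).trans bot_le

section Scott

variable {α β : Type*}

theorem continuous_toScott_comp_of_scottContinuous [Preorder α] [TopologicalSpace α]
    [IsScott α univ] [Preorder β] {f : α → β} (hf : ScottContinuous f) :
    Continuous fun a => WithScott.toScott (f a) :=
  (IsScott.scottContinuousOn_iff_continuous (f := fun a => WithScott.toScott (f a))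
    fun _ _ _ => mem_univ _).1 hf.scottContinuousOn

theorem isOpen_ofScott_preimage_of_forall_isOpen_section [Preorder α] [TopologicalSpace α]
    [IsScott α univ] [Preorder β] [TopologicalSpace β] [IsScott β univ] {U : Set (α × β)}
    (hleft : ∀ b, IsOpen {a | (a, b) ∈ U}) (hright : ∀ a, IsOpen {b | (a, b) ∈ U}) :
    IsOpen (WithScott.ofScott ⁻¹' U) :=
  IsScott.isOpen_iff_scottContinuous_mem.2 <| ScottContinuous.fromProd (f := (· ∈ U))
    (fun a => IsScott.isOpen_iff_scottContinuous_mem.1 (hright a))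
    (fun b => IsScott.isOpen_iff_scottContinuous_mem.1 (hleft b))

end Scott

theorem pointwiseSupDiscontinuous_prod {A B : Type}
    [CompleteLattice A] [TopologicalSpace A] [IsScott A univ]
    [CompleteLattice B] [TopologicalSpace B] [IsScott B univ] {U : Set (A × B)}
    (hscott : IsOpen (WithScott.ofScott ⁻¹' U)) (hprod : ¬ IsOpen U) :
    PointwiseSupDiscontinuous (A × B) (A × B) := by
  have continuous_left : Continuous fun p : A × B => WithScott.toScott (p.1, (⊥ : B)) :=
    (continuous_toScott_comp_of_scottContinuous (.prodMk .id (.const ⊥))).comp continuous_fst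
  have continuous_right : Continuous fun p : A × B => WithScott.toScott ((⊥ : A), p.2) :=
    (continuous_toScott_comp_of_scottContinuous (.prodMk (.const ⊥) .id)).comp continuous_snd
  refine ⟨fun p => (p.1, ⊥), fun p => (⊥, p.2), continuous_left, continuous_right,
    fun (hsup : Continuous fun p : A × B => WithScott.toScott ((p.1, (⊥ : B)) ⊔ (⊥, p.2))) => ?_⟩
  have continuous_toScott : Continuous (WithScott.toScott (α := A × B)) := by
    simpa only [Prod.mk_sup_mk, sup_bot_eq, bot_sup_eq] using hsup
  exact hprod (hscott.preimage continuous_toScott)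

/-- The fan over `ι`: a copy `node i 0 < node i 1 < ⋯` of the chain `ℕ` for every `i : ι`, with
a common bottom and a common top added. It is the basic lattice of the construction: neighbourhoods
of `⊤` have to meet every chain, but may do so arbitrarily late. -/
inductive ChainFan (ι : Type*) : Type _
  | bot : ChainFan ι
  | node : ι → ℕ → ChainFan ι
  | top : ChainFan ι

namespace ChainFan

variable {ι : Type*}

/-- The order of the fan, in which nodes of different chains are incomparable. -/
inductive Le : ChainFan ι → ChainFan ι → Prop
  | bot_le (a : ChainFan ι) : Le bot a
  | le_top (a : ChainFan ι) : Le a top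
  | node_le_node (i : ι) {m n : ℕ} (h : m ≤ n) : Le (node i m) (node i n)

instance : PartialOrder (ChainFan ι) where
  le := Le
  le_refl a := by cases a <;> constructor; rfl
  le_trans a b c hab hbc := by
    cases hab <;> cases hbc <;> constructor
    exact le_trans ‹_› ‹_›
  le_antisymm a b hab hba := by
    rcases hab with _ | _ | ⟨i, hmn⟩ <;> rcases hba with _ | _ | ⟨_, hnm⟩
    case node_le_node.node_le_node => rw [le_antisymm hmn hnm]
    all_goals rfl

instance : BoundedOrder (ChainFan ι) where
  bot := bot
  bot_le := Le.bot_le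
  top := top
  le_top := Le.le_top

theorem node_le_node_iff {i j : ι} {m n : ℕ} : node i m ≤ node j n ↔ i = j ∧ m ≤ n :=
  ⟨fun | .node_le_node _ h => ⟨rfl, h⟩, fun ⟨hij, h⟩ => hij ▸ .node_le_node _ h⟩

theorem node_monotone (i : ι) : Monotone (node i) := fun _ _ h => .node_le_node i h

theorem not_node_le_bot {i : ι} {n : ℕ} : ¬ node i n ≤ ⊥ := nofun

theorem not_top_le_node {i : ι} {n : ℕ} : ¬ ⊤ ≤ node i n := nofun

theorem le_or_le_or_disjoint (a b : ChainFan ι) : a ≤ b ∨ b ≤ a ∨ Disjoint a b := by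
  match a, b with
  | bot, _ => exact .inl bot_le
  | _, bot => exact .inr (.inl bot_le)
  | top, _ => exact .inr (.inl le_top)
  | _, top => exact .inl le_top
  | node i m, node j n =>
    by_cases hij : i = j
    · subst hij
      exact (le_total m n).imp (node_monotone i ·) (.inl <| node_monotone i ·)
    · refine .inr (.inr ?_)
      rintro (_ | ⟨k, l⟩ | _) hi hj
      · exact le_rfl
      · exact absurd ((node_le_node_iff.1 hi).1.symm.trans (node_le_node_iff.1 hj).1) hij
      · exact absurd hi not_top_le_node

/-- The height of an element above the bottom of the fan. -/
def height : ChainFan ι → ℕ∞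
  | bot => 0
  | node _ n => (n + 1 : ℕ)
  | top => ⊤

theorem height_strictMono : StrictMono (height (ι := ι)) := by
  intro a b hab
  have hba : ¬ b ≤ a := hab.not_ge
  cases hab.le with
  | bot_le =>
    cases b with
    | bot => exact absurd le_rfl hba
    | node j n => exact Nat.cast_pos.2 n.succ_pos
    | top => exact ENat.top_pos
  | le_top =>
    cases a with
    | bot => exact ENat.top_pos
    | node i m => exact ENat.natCast_lt_top (m + 1)
    | top => exact absurd le_rfl hba
  | node_le_node i hmn =>
    have hlt := not_le.1 (mt (node_monotone i ·) hba)
    exact Nat.cast_lt.2 (Nat.succ_lt_succ hlt)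

instance : WellFoundedLT (ChainFan ι) := height_strictMono.wellFoundedLT

noncomputable instance : SupSet (ChainFan ι) where
  sSup s := (exists_isLUB_of_le_or_le_or_disjoint le_or_le_or_disjoint s).choose

noncomputable instance : CompleteLattice (ChainFan ι) where
  __ := (inferInstance : BoundedOrder (ChainFan ι))
  __ := completeLatticeOfSup (ChainFan ι) fun s =>
    (exists_isLUB_of_le_or_le_or_disjoint le_or_le_or_disjoint s).choose_spec

theorem isLUB_range_node (i : ι) : IsLUB (range (node i)) ⊤ := by
  refine ⟨fun _ _ => le_top, ?_⟩
  rintro (_ | ⟨j, n⟩ | _) hb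
  · exact absurd (hb (mem_range_self 0)) not_node_le_bot
  · have := (node_le_node_iff.1 (hb (mem_range_self (n + 1)))).2
    omega
  · exact le_rfl

theorem finite_Iic_node (i : ι) (n : ℕ) : (Iic (node i n)).Finite := by
  refine (((finite_Iic n).image (node i)).insert ⊥).subset ?_
  rintro _ (_ | _ | @⟨_, m, _, h⟩)
  · exact mem_insert _ _
  · exact mem_insert_of_mem _ (mem_image_of_mem _ h)

theorem finite_of_directedOn_of_node_notMem {d : Set (ChainFan ι)} (hd : DirectedOn (· ≤ ·) d)
    (htop : ⊤ ∉ d) {b : ι → ℕ} (hb : ∀ i, ∀ n ≥ b i, node i n ∉ d) : d.Finite := by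
  by_cases hnode : ∃ i n, node i n ∈ d
  · obtain ⟨i, n, hn⟩ := hnode
    refine (finite_Iic_node i (b i)).subset fun x hx => ?_
    obtain ⟨c, hc, hnc, hxc⟩ := hd _ hn _ hx
    cases hnc with
    | le_top => exact absurd hc htop
    | @node_le_node _ _ m _ =>
      have : m ≤ b i := (not_le.1 fun h => hb i m h hc).le
      exact hxc.trans (node_monotone i this)
  · refine (finite_singleton ⊥).subset ?_
    rintro (_ | ⟨i, n⟩ | _) hx
    · rfl
    · exact absurd ⟨i, n, hx⟩ hnode
    · exact absurd hx htop

instance : TopologicalSpace (ChainFan ι) := scott (ChainFan ι) univ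

instance : IsScott (ChainFan ι) univ := ⟨rfl⟩

theorem isOpen_iff {s : Set (ChainFan ι)} :
    IsOpen s ↔ IsUpperSet s ∧ (⊤ ∈ s → ∀ i, ∃ n, node i n ∈ s) := by
  rw [IsScott.isOpen_iff_isUpperSet_and_dirSupInaccOn (D := univ), dirSupInaccOn_univ]
  refine and_congr_right fun hupper => ⟨fun hs htop i => ?_, fun hs => ?_⟩
  · obtain ⟨_, ⟨n, rfl⟩, hn⟩ := hs (range_nonempty (node i))
      (node_monotone i).directed_le.directedOn_range (isLUB_range_node i) htop
    exact ⟨n, hn⟩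
  · refine dirSupInacc_iff_forall_sSup.2 fun d hne hd hsup => ?_
    by_contra hempty
    have notMem : ∀ x ∈ d, x ∉ s := fun x hxd hxs => hempty ⟨x, hxd, hxs⟩
    have htop : ⊤ ∈ s := hupper le_top hsup
    choose b hb using hs htop
    have hfin : d.Finite := finite_of_directedOn_of_node_notMem hd (fun h => notMem _ h htop)
      fun i n hn hnd => notMem _ hnd (hupper (node_monotone i hn) (hb i))
    obtain ⟨x, hx, hle⟩ := (le_sSup_iff_of_directedOn hne hfin hd).1 le_rfl
    exact notMem x hx (hupper hle hsup)

/-- The relation between the fans over `ℕ` and over `ℕ → ℕ` that is open in each variable but not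
jointly: reading `node n m` as the point `(n, m)` of the grid and `node φ k` as the set of points to
the left of column `k` or above the graph of `φ`, it is incidence. -/
def Incident : ChainFan ℕ → ChainFan (ℕ → ℕ) → Prop
  | bot, _ => False
  | _, bot => False
  | node n m, node φ k => n < k ∨ φ n < m
  | _, _ => True

theorem Incident.mono {a a' : ChainFan ℕ} {b b' : ChainFan (ℕ → ℕ)} (ha : a ≤ a') (hb : b ≤ b')
    (h : Incident a b) : Incident a' b' := by
  rcases ha with _ | a | ⟨n, hm⟩ <;> rcases hb with _ | b | ⟨φ, hk⟩
  case node_le_node.node_le_node => exact h.imp (·.trans_le hk) (·.trans_le hm)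
  all_goals first | trivial | cases a <;> trivial

theorem isOpen_setOf_incident_left (b : ChainFan (ℕ → ℕ)) : IsOpen {a | Incident a b} := by
  refine isOpen_iff.2 ⟨fun _ _ ha => Incident.mono ha le_rfl, fun htop n => ?_⟩
  cases b with
  | bot => exact htop.elim
  | node φ k => exact ⟨φ n + 1, .inr (Nat.lt_succ_self _)⟩
  | top => exact ⟨0, trivial⟩

theorem isOpen_setOf_incident_right (a : ChainFan ℕ) : IsOpen {b | Incident a b} := by
  refine isOpen_iff.2 ⟨fun _ _ hb => Incident.mono le_rfl hb, fun htop φ => ?_⟩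
  cases a with
  | bot => exact htop.elim
  | node n m => exact ⟨n + 1, .inl (Nat.lt_succ_self _)⟩
  | top => exact ⟨0, trivial⟩

theorem not_isOpen_setOf_incident :
    ¬ IsOpen {p : ChainFan ℕ × ChainFan (ℕ → ℕ) | Incident p.1 p.2} := by
  intro hopen
  obtain ⟨V, W, hV, hW, htopV, htopW, hVW⟩ := isOpen_prod_iff.1 hopen ⊤ ⊤ trivial
  choose φ hφ using (isOpen_iff.1 hV).2 htopV
  obtain ⟨k, hk⟩ := (isOpen_iff.1 hW).2 htopW φ
  have incident : k < k ∨ φ k < φ k := hVW (mk_mem_prod (hφ k) hk)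
  exact incident.elim (lt_irrefl _) (lt_irrefl _)

end ChainFan

/-- There exist a topological space `X`, a complete lattice `Z`, and two functions
`f, g : X → Z`, each continuous with respect to the topology on `X` and the Scott topology
on `Z`, such that the pointwise supremum `h(x) = f(x) ⊔ g(x)` is not continuous with respect
to the topology on `X` and the Scott topology on `Z`. -/
theorem stmt_2 : ∃ (X Z : Type) (tX : TopologicalSpace X) (cZ : CompleteLattice Z),
    @PointwiseSupDiscontinuous X Z tX cZ :=
  ⟨_, _, _, _, pointwiseSupDiscontinuous_prod
    (isOpen_ofScott_preimage_of_forall_isOpen_section ChainFan.isOpen_setOf_incident_left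
      ChainFan.isOpen_setOf_incident_right)
    ChainFan.not_isOpen_setOf_incident⟩
end

section
/- There exist complete lattices X₁ and X₂ such that the Scott topology on the product X₁ × X₂ (equipped with the componentwise partial order) is strictly finer than the product topology of the Scott topology on X₁ and the Scott topology on X₂. -/
/-- The Scott topology on `X₁ × X₂` (with the componentwise order) is strictly finer than the
product topology of the Scott topologies on the factors: every set open in the product
topology is Scott open, and some Scott open set is not open in the product topology. -/
def ScottStrictlyFinerThanProd (X₁ X₂ : Type) [Preorder X₁] [Preorder X₂] : Prop :=
  (∀ U : Set (X₁ × X₂),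
      (@instTopologicalSpaceProd X₁ X₂ (Topology.scott X₁ Set.univ)
        (Topology.scott X₂ Set.univ)).IsOpen U →
      (Topology.scott (X₁ × X₂) Set.univ).IsOpen U) ∧
  ∃ U : Set (X₁ × X₂), (Topology.scott (X₁ × X₂) Set.univ).IsOpen U ∧
    ¬ (@instTopologicalSpaceProd X₁ X₂ (Topology.scott X₁ Set.univ)
        (Topology.scott X₂ Set.univ)).IsOpen U

/-- The same property, stated for complete lattices. -/
def ScottStrictlyFinerThanProdCL (X₁ X₂ : Type) [CompleteLattice X₁] [CompleteLattice X₂] :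
    Prop :=
  ScottStrictlyFinerThanProd X₁ X₂

/-!
Let `X` carry its Scott topology. Membership `{(x, U) | x ∈ U}` is always Scott open in
`X × Opens X`, being Scott continuous in each variable. If it is open in the product topology,
then a rectangle `V × W` inside it around `(x, U)` forces `V` to be way below `U`, since `W` is a
Scott neighbourhood of `U` all of whose members contain `V`; so `X` is core-compact.

It remains to find a complete lattice whose Scott topology is not core-compact. Suppose that
infinitely many directed sets `D i` have the same supremum `t ≠ ⊥`, and that elements of different
`D i` are disjoint. A Scott neighbourhood `V` of `t` contains some `a i ∈ D i` for every `i`. The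
complements of the lower closures of `{a i | i ∉ F}`, for `F` finite, are Scott open and directed
and cover `{⊥}ᶜ`, but none of them contains `V`. The closed subsets of a T₁ space with infinitely
many disjoint dense subsets form such a lattice, for instance those of a countably infinite space
with the cofinite topology.
-/

open Function Set Topology TopologicalSpace

/-- The way-below relation `a ≪ b` of domain theory: every nonempty directed set with a least upper
bound above `b` has an element above `a`. -/
def WayBelow {α : Type*} [Preorder α] (a b : α) : Prop :=
  ∀ ⦃d : Set α⦄, d.Nonempty → DirectedOn (· ≤ ·) d → ∀ ⦃c⦄, IsLUB d c → b ≤ c → ∃ x ∈ d, a ≤ x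

/-- Core-compactness of a topological space: every open neighbourhood `U` of a point contains an
open neighbourhood of it that is way below `U` in the lattice of open sets. -/
def IsCoreCompact (X : Type*) [TopologicalSpace X] : Prop :=
  ∀ (x : X) (U : Opens X), x ∈ U → ∃ V : Opens X, x ∈ V ∧ WayBelow V U

theorem isCoreCompact_of_isOpen_setOf_mem {X : Type*} [TopologicalSpace X]
    [TopologicalSpace (Opens X)] [IsScott (Opens X) univ]
    (h : IsOpen {p : X × Opens X | p.1 ∈ p.2}) : IsCoreCompact X := by
  intro x U hxU
  obtain ⟨V, W, hV, hW, hxV, hUW, hVW⟩ := isOpen_prod_iff.1 h x U hxU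
  refine ⟨⟨V, hV⟩, hxV, fun d hne hdir c hc hUc ↦ ?_⟩
  obtain ⟨hupper, hinacc⟩ := IsScott.isOpen_iff_isUpperSet_and_dirSupInaccOn (D := univ).1 hW
  obtain ⟨U', hU'd, hU'W⟩ := hinacc (mem_univ d) hne hdir hc (hupper hUc hUW)
  exact ⟨U', hU'd, fun y hy ↦ hVW (mk_mem_prod hy hU'W)⟩

theorem continuous_scott_of_scottContinuous {α β : Type*} [Preorder α] [Preorder β] {f : α → β}
    (hf : ScottContinuous f) : Continuous[scott α univ, scott β univ] f := by
  let := scott α univ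
  let := scott β univ
  have : IsScott α univ := ⟨rfl⟩
  have : IsScott β univ := ⟨rfl⟩
  exact (IsScott.scottContinuousOn_iff_continuous fun _ _ _ ↦ mem_univ _).1 hf.scottContinuousOn

theorem scott_prod_le (α β : Type*) [Preorder α] [Preorder β] :
    scott (α × β) univ ≤ @instTopologicalSpaceProd α β (scott α univ) (scott β univ) :=
  le_inf (continuous_iff_le_induced.1 (continuous_scott_of_scottContinuous .fst))
    (continuous_iff_le_induced.1 (continuous_scott_of_scottContinuous .snd))

theorem scottContinuous_mem_opens {X : Type*} [TopologicalSpace X] (x : X) :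
    ScottContinuous fun U : Opens X ↦ x ∈ U :=
  scottContinuous_iff_map_sSup.2 fun d _ _ ↦ by simp [sSup_image]

theorem isOpen_scott_setOf_mem_opens (X : Type*) [Preorder X] [TopologicalSpace X]
    [IsScott X univ] : IsOpen[scott (X × Opens X) univ] {p | p.1 ∈ p.2} := by
  let := scott (X × Opens X) univ
  have : IsScott (X × Opens X) univ := ⟨rfl⟩
  exact IsScott.isOpen_iff_scottContinuous_mem.2 <| .fromProd scottContinuous_mem_opens
    fun U ↦ IsScott.isOpen_iff_scottContinuous_mem.1 U.isOpen

theorem scottStrictlyFinerThanProd_opens {X : Type} [Preorder X] [TopologicalSpace X]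
    [IsScott X univ] (hX : ¬ IsCoreCompact X) : ScottStrictlyFinerThanProd X (Opens X) := by
  refine ⟨scott_prod_le X (Opens X), _, isOpen_scott_setOf_mem_opens X, fun h ↦ hX ?_⟩
  let := scott (Opens X) univ
  have : IsScott (Opens X) univ := ⟨rfl⟩
  rw [← IsScott.topology_eq X univ] at h
  exact isCoreCompact_of_isOpen_setOf_mem h

section DisjointDirected

variable {α ι : Type*} [PartialOrder α] [OrderBot α]

theorem dirSupClosed_lowerClosure_of_pairwiseDisjoint {s : Set ι} {f : ι → α}
    (hs : s.PairwiseDisjoint f) : DirSupClosed (lowerClosure (f '' s) : Set α) := by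
  intro d hd hne hdir a ha
  by_cases hbot : ∀ x ∈ d, x = ⊥
  · obtain ⟨x, hx⟩ := hne
    have hax : a ≤ x := ha.2 fun y hy ↦ (hbot y hy).trans_le bot_le
    exact (lowerClosure _).lower hax (hd hx)
  push Not at hbot
  obtain ⟨x, hx, hx_ne⟩ := hbot
  obtain ⟨_, ⟨i, hi, rfl⟩, hxi⟩ := hd hx
  refine ⟨f i, mem_image_of_mem f hi, ha.2 fun y hy ↦ ?_⟩
  obtain ⟨z, hz, hxz, hyz⟩ := hdir x hx y hy
  obtain ⟨_, ⟨j, hj, rfl⟩, hzj⟩ := hd hz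
  obtain rfl : i = j := hs.elim hi hj fun h ↦ hx_ne (le_bot_iff.1 (h hxi (hxz.trans hzj)))
  exact hyz.trans hzj

variable [TopologicalSpace α] [IsScott α univ]

theorem isClosed_lowerClosure_of_pairwiseDisjoint {s : Set ι} {f : ι → α}
    (hs : s.PairwiseDisjoint f) : IsClosed (lowerClosure (f '' s) : Set α) :=
  IsScott.isClosed_iff_isLowerSet_and_dirSupClosed.2
    ⟨(lowerClosure _).lower, dirSupClosed_lowerClosure_of_pairwiseDisjoint hs⟩

theorem not_wayBelow_of_bot_notMem [Infinite ι] {a : ι → α}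
    (ha : Pairwise (Disjoint on a)) {U V : Opens α} (hU : ⊥ ∉ U) (haV : ∀ i, a i ∈ V) :
    ¬ WayBelow V U := by
  classical
  let C (F : Finset ι) : Set α := lowerClosure (a '' (F : Set ι)ᶜ)
  have hC (F : Finset ι) : IsClosed (C F) :=
    isClosed_lowerClosure_of_pairwiseDisjoint (ha.set_pairwise _)
  let O (F : Finset ι) : Opens α := ⟨(C F)ᶜ, (hC F).isOpen_compl⟩
  have hO : Monotone O := fun F G hFG ↦ compl_subset_compl.2 <|
    lowerClosure_mono <| image_mono <| compl_subset_compl.2 <| Finset.coe_subset.2 hFG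
  have hcover : U ≤ ⨆ F, O F := by
    intro x hx
    by_contra hxO
    have hxC (F : Finset ι) : x ∈ C F := not_not.1 fun h ↦ hxO (Opens.mem_iSup.2 ⟨F, h⟩)
    obtain ⟨_, ⟨i, -, rfl⟩, hxi⟩ := hxC ∅
    obtain ⟨_, ⟨j, hj, rfl⟩, hxj⟩ := hxC {i}
    have hij : i ≠ j := fun h ↦ hj (by simp [h])
    have hx_bot : x = ⊥ := le_bot_iff.1 (ha hij hxi hxj)
    exact hU (hx_bot ▸ hx)
  intro hVU
  obtain ⟨_, ⟨F, rfl⟩, hVF⟩ :=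
    hVU (range_nonempty O) hO.directed_le.directedOn_range isLUB_iSup hcover
  obtain ⟨i, hi⟩ := Infinite.exists_notMem_finset F
  exact hVF (haV i) (subset_lowerClosure (mem_image_of_mem a hi))

theorem not_isCoreCompact_of_isLUB_disjoint [Infinite ι] {D : ι → Set α} {t : α}
    (ht : t ≠ ⊥) (hdir : ∀ i, DirectedOn (· ≤ ·) (D i)) (hlub : ∀ i, IsLUB (D i) t)
    (hdisj : Pairwise fun i j ↦ ∀ a ∈ D i, ∀ b ∈ D j, Disjoint a b) : ¬ IsCoreCompact α := by
  intro hα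
  have hclosed : IsClosed ({⊥} : Set α) := Iic_bot (α := α) ▸ isClosed_Iic
  obtain ⟨V, htV, hV⟩ := hα t ⟨{⊥}ᶜ, hclosed.isOpen_compl⟩ ht
  have hmeets (i : ι) : ∃ a ∈ D i, a ∈ V := by
    have hne : (D i).Nonempty := nonempty_iff_ne_empty.2 fun h ↦
      ht (isLUB_empty.unique (h ▸ hlub i)).symm
    exact (IsScott.isOpen_iff_isUpperSet_and_dirSupInaccOn (D := univ).1 V.isOpen).2
      (mem_univ _) hne (hdir i) (hlub i) htV
  choose a haD haV using hmeets
  exact not_wayBelow_of_bot_notMem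
    (fun i j hij ↦ hdisj hij _ (haD i) _ (haD j)) (by simp [← SetLike.mem_coe]) haV hV

end DisjointDirected

section Closeds

variable {Y : Type*} [TopologicalSpace Y]

theorem directedOn_closeds_subset (s : Set Y) :
    DirectedOn (· ≤ ·) {C : Closeds Y | (C : Set Y) ⊆ s} :=
  directedOn_of_sup_mem fun C C' hC hC' ↦
    (Closeds.coe_sup C C').trans_subset (union_subset hC hC')

theorem isLUB_closeds_subset_of_dense [T1Space Y] {s : Set Y} (hs : Dense s) :
    IsLUB {C : Closeds Y | (C : Set Y) ⊆ s} ⊤ := by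
  refine ⟨fun _ _ ↦ le_top, fun C hC ↦ ?_⟩
  have hsC : s ⊆ C := fun y hy ↦
    hC (a := {y}) (singleton_subset_iff.2 hy) (mem_singleton y)
  exact fun y _ ↦ C.isClosed.closure_subset_iff.2 hsC (hs y)

theorem not_isCoreCompact_closeds_of_dense [T1Space Y] [Nonempty Y] [TopologicalSpace (Closeds Y)]
    [IsScott (Closeds Y) univ] {ι : Type*} [Infinite ι] {s : ι → Set Y}
    (hdense : ∀ i, Dense (s i)) (hdisj : Pairwise (Disjoint on s)) :
    ¬ IsCoreCompact (Closeds Y) := by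
  have htop : (⊤ : Closeds Y) ≠ ⊥ := Closeds.coe_nonempty.1 univ_nonempty
  refine not_isCoreCompact_of_isLUB_disjoint htop (fun i ↦ directedOn_closeds_subset (s i))
    (fun i ↦ isLUB_closeds_subset_of_dense (hdense i)) fun i j hij C hC C' hC' ↦ ?_
  have hCC' : Disjoint (C : Set Y) C' := (hdisj hij).mono hC hC'
  exact disjoint_iff.2 <| Closeds.ext <| by simpa using hCC'.inter_eq

theorem dense_cofiniteTopology_of_infinite {X : Type*} {s : Set (CofiniteTopology X)}
    (hs : s.Infinite) : Dense s :=
  dense_iff_closure_eq.2 <| (CofiniteTopology.isClosed_iff.1 isClosed_closure).resolve_right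
    fun h ↦ hs (h.subset subset_closure)

end Closeds

/-- There exist complete lattices `X₁` and `X₂` such that the Scott topology on the product
`X₁ × X₂` (with the componentwise partial order) is strictly finer than the product topology
of the Scott topology on `X₁` and the Scott topology on `X₂`. -/
theorem stmt_3 : ∃ (X₁ X₂ : Type) (c₁ : CompleteLattice X₁) (c₂ : CompleteLattice X₂),
    @ScottStrictlyFinerThanProdCL X₁ X₂ c₁ c₂ := by
  let Y := CofiniteTopology (ℕ × ℕ)
  let : TopologicalSpace (Closeds Y) := scott (Closeds Y) univ
  have : IsScott (Closeds Y) univ := ⟨rfl⟩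
  let column (i : ℕ) : Set Y := range fun n ↦ CofiniteTopology.of (i, n)
  have hdense (i : ℕ) : Dense (column i) := dense_cofiniteTopology_of_infinite <|
    infinite_range_of_injective <| CofiniteTopology.of.injective.comp (Prod.mk_right_injective i)
  have hdisj : Pairwise (Disjoint on column) := fun i j hij ↦
    disjoint_range_iff.2 fun n m h ↦ hij (Prod.mk.inj (CofiniteTopology.of.injective h)).1
  exact ⟨Closeds Y, Opens (Closeds Y), inferInstance, inferInstance,
    scottStrictlyFinerThanProd_opens (not_isCoreCompact_closeds_of_dense hdense hdisj)⟩
end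

section
/- Let X₁ be a partially ordered set and let X₂ be the collection of all Scott open subsets of X₁, partially ordered by set-theoretic inclusion. Then the set E = {(x₁, x₂) ∈ X₁ × X₂ : x₁ ∈ x₂} is open in the Scott topology of the componentwise partial order on X₁ × X₂. -/
/-!
A set is Scott open exactly when its membership predicate is a Scott continuous map to `Prop`, and
a map on a product is Scott continuous as soon as it is so in each variable. The predicate `x ∈ U`
is Scott continuous in `x` because `U` is Scott open, and in `U` because suprema of directed
families of Scott open sets are unions.
-/

theorem scottContinuous_subtype_val {α : Type*} [CompleteLattice α] {p : α → Prop}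
    (hp : ∀ s : Set α, (∀ a ∈ s, p a) → s.Nonempty → DirectedOn (· ≤ ·) s → p (sSup s)) :
    ScottContinuous (Subtype.val : Subtype p → α) := by
  intro d hne hd a ha
  have hp_sSup : p (sSup (Subtype.val '' d)) :=
    hp _ (by rintro _ ⟨b, -, rfl⟩; exact b.2) (hne.image _) (directedOn_image.mpr hd)
  have ha_le_sSup : a.val ≤ sSup (Subtype.val '' d) :=
    ha.2 (show ⟨_, hp_sSup⟩ ∈ upperBounds d from fun _ hb => le_sSup (Set.mem_image_of_mem _ hb))
  exact ⟨(Subtype.mono_coe _).mem_upperBounds_image ha.1,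
    fun _ hc => ha_le_sSup.trans (sSup_le fun _ hb => hc hb)⟩

theorem scottContinuous_mem_set {α : Type*} (x : α) : ScottContinuous fun s : Set α => x ∈ s := by
  intro d _ _ s hs
  obtain rfl := hs.sSup_eq
  simpa only [Set.sSup_eq_sUnion, Set.mem_sUnion, sSup_Prop_eq, Set.exists_mem_image, eq_iff_iff]
    using isLUB_sSup ((x ∈ ·) '' d)

theorem isOpen_scott_iff_scottContinuous_mem {α : Type*} [Preorder α] {s : Set α} :
    (Topology.scott α Set.univ).IsOpen s ↔ ScottContinuous fun x => x ∈ s :=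
  letI := Topology.scott α Set.univ
  haveI : Topology.IsScott α Set.univ := ⟨rfl⟩
  Topology.IsScott.isOpen_iff_scottContinuous_mem

theorem stmt_7_general {α : Type*} [Preorder α] {P : Set α → Prop}
    (hP_isOpen : ∀ U, P U → (Topology.scott α Set.univ).IsOpen U)
    (hP_sUnion : ∀ S : Set (Set α), (∀ U ∈ S, P U) → S.Nonempty → DirectedOn (· ⊆ ·) S →
      P (⋃₀ S)) :
    (Topology.scott (α × {U : Set α // P U}) Set.univ).IsOpen
      {p : α × {U : Set α // P U} | p.1 ∈ p.2.val} :=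
  isOpen_scott_iff_scottContinuous_mem.mpr <| .fromProd
    (fun x => (scottContinuous_subtype_val hP_sUnion).comp (scottContinuous_mem_set x))
    (fun U => isOpen_scott_iff_scottContinuous_mem.mp (hP_isOpen U U.2))

/-- Let `X₁` be a partially ordered set and let `X₂` be the collection of all Scott open
subsets of `X₁`, partially ordered by set-theoretic inclusion. Then the set
`E = {(x₁, x₂) : x₁ ∈ x₂}` is open in the Scott topology of the componentwise partial order
on `X₁ × X₂`. -/
theorem stmt_7 (X₁ : Type) [PartialOrder X₁] :
    (Topology.scott (X₁ × {U : Set X₁ // (Topology.scott X₁ Set.univ).IsOpen U})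
        Set.univ).IsOpen
      {p : X₁ × {U : Set X₁ // (Topology.scott X₁ Set.univ).IsOpen U} | p.1 ∈ p.2.val} :=
  stmt_7_general (fun _ hU => hU) fun S hS _ _ => (Topology.scott X₁ Set.univ).isOpen_sUnion S hS
end

section
/- Let X be a partially ordered set equipped with its Scott topology, and let Z be a bounded complete dcpo, i.e., a partially ordered set in which every directed subset has a least upper bound and every subset that has an upper bound has a least upper bound. Then the poset of functions X → Z that are continuous with respect to the Scott topology on X and the Scott topology on Z, ordered pointwise, is bounded complete: every set F of such continuous functions that has an upper bound (among such continuous functions) has a least upper bound, namely the pointwise supremum g(x) = sup { f(x) : f ∈ F }, which is itself Scott continuous. -/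
/-!
Suprema commute with suprema: if every `f ∈ F` preserves the supremum of a directed set `d`, then
`sup_{x ∈ d} sup_{f ∈ F} f x = sup_{f ∈ F} sup_{x ∈ d} f x`, so `sup F` preserves it too. As
continuity for the Scott topologies is preservation of directed suprema, the pointwise supremum of
continuous functions is continuous.
-/

open Set Topology

theorem isLUB_image_of_isLUB {X Z : Type*} [Preorder Z] {F : Set (X → Z)} {g : X → Z} {d : Set X}
    {a : X} (hg : IsLUB F g) (hF : ∀ f ∈ F, IsLUB (f '' d) (f a)) : IsLUB (g '' d) (g a) := by
  have apply_le_iff (x : X) (z : Z) : g x ≤ z ↔ ∀ f ∈ F, f x ≤ z := by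
    simpa only [mem_upperBounds, forall_mem_image, Function.eval] using
      isLUB_le_iff (isLUB_pi.mp hg x)
  refine isLUB_iff_le_iff.mpr fun z ↦ ?_
  calc
    g a ≤ z ↔ ∀ f ∈ F, f a ≤ z := apply_le_iff a z
    _ ↔ ∀ f ∈ F, ∀ x ∈ d, f x ≤ z := forall₂_congr fun f hf ↦ by
      rw [isLUB_le_iff (hF f hf), mem_upperBounds, forall_mem_image]
    _ ↔ ∀ x ∈ d, ∀ f ∈ F, f x ≤ z := forall₂_comm
    _ ↔ z ∈ upperBounds (g '' d) := by
      simp only [mem_upperBounds, forall_mem_image, apply_le_iff]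

section Scott

variable {X Z : Type*} [Preorder X] [Preorder Z] {D : Set (Set X)} {F : Set (X → Z)} {g : X → Z}

theorem scottContinuousOn_of_isLUB (hg : IsLUB F g) (hF : ∀ f ∈ F, ScottContinuousOn D f) :
    ScottContinuousOn D g :=
  fun _ hdD hne hdir _ ha ↦ isLUB_image_of_isLUB hg fun f hf ↦ hF f hf hdD hne hdir ha

theorem continuous_of_isLUB [TopologicalSpace X] [IsScott X D] [TopologicalSpace Z]
    [IsScott Z univ] (hD : ∀ a b : X, a ≤ b → {a, b} ∈ D) (hg : IsLUB F g)
    (hF : ∀ f ∈ F, Continuous f) : Continuous g := by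
  simp only [← IsScott.scottContinuousOn_iff_continuous hD] at hF ⊢
  exact scottContinuousOn_of_isLUB hg hF

theorem stmt_9_general (hD : ∀ a b : X, a ≤ b → {a, b} ∈ D)
    (hbc : ∀ s : Set Z, BddAbove s → ∃ a, IsLUB s a)
    (hF : ∀ f ∈ F, Continuous[scott X D, scott Z univ] f) (hbdd : BddAbove F) :
    ∃ g : X → Z, IsLUB F g ∧ Continuous[scott X D, scott Z univ] g := by
  let _ := scott X D
  let _ := scott Z univ
  have : IsScott X D := ⟨rfl⟩
  have : IsScott Z univ := ⟨rfl⟩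
  choose g hg using fun x ↦ hbc _ ((Function.monotone_eval x).map_bddAbove hbdd)
  have hlub : IsLUB F g := isLUB_pi.mpr hg
  exact ⟨g, hlub, continuous_of_isLUB hD hlub hF⟩

end Scott

/-- Let `X` be a partially ordered set equipped with its Scott topology, and let `Z` be a
bounded complete dcpo: every nonempty directed subset has a least upper bound, and every
subset that has an upper bound has a least upper bound. Then the poset of Scott continuous
functions `X → Z`, ordered pointwise, is bounded complete: every set `F` of such continuous
functions that has a continuous upper bound has a least upper bound among the continuous
functions, namely the pointwise supremum `g` (with `g x` the least upper bound of
`{f x : f ∈ F}`), which is itself Scott continuous. -/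
theorem stmt_9 (X Z : Type) [PartialOrder X] [PartialOrder Z]
    (hdcpo : ∀ d : Set Z, d.Nonempty → DirectedOn (· ≤ ·) d → ∃ a, IsLUB d a)
    (hbc : ∀ s : Set Z, (∃ b, b ∈ upperBounds s) → ∃ a, IsLUB s a)
    (F : Set (X → Z))
    (hF : ∀ f ∈ F, @Continuous X Z (Topology.scott X Set.univ) (Topology.scott Z Set.univ) f)
    (hbdd : ∃ b : X → Z,
      @Continuous X Z (Topology.scott X Set.univ) (Topology.scott Z Set.univ) b ∧
      ∀ f ∈ F, f ≤ b) :
    ∃ g : X → Z,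
      (∀ x : X, IsLUB {z : Z | ∃ f ∈ F, f x = z} (g x)) ∧
      @Continuous X Z (Topology.scott X Set.univ) (Topology.scott Z Set.univ) g ∧
      (∀ f ∈ F, f ≤ g) ∧
      (∀ b : X → Z,
        @Continuous X Z (Topology.scott X Set.univ) (Topology.scott Z Set.univ) b →
        (∀ f ∈ F, f ≤ b) → g ≤ b) := by
  obtain ⟨g, hg, hgc⟩ :=
    stmt_9_general (fun _ _ _ ↦ mem_univ _) hbc hF (hbdd.imp fun _ hb ↦ hb.2)
  exact ⟨g, isLUB_pi.mp hg, hgc, hg.1, fun _ _ hb ↦ hg.2 hb⟩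
end

section
/- Let X be a topological space, Z a complete lattice, and f, g : X → Z two functions continuous with respect to the topology on X and the Scott topology on Z. Then the following are equivalent: (1) the set {f, g} has a least upper bound in the poset of continuous functions from X to Z (with Scott topology on Z) ordered pointwise; (2) the pointwise supremum h : X → Z, h(x) = f(x) ⊔ g(x), is continuous with respect to the topology on X and the Scott topology on Z. Moreover, if these conditions hold, then the pointwise supremum h is the least upper bound of {f, g} in the poset of continuous functions. -/
/-!
If `u : X → Z` is continuous and `x ∈ closure {p}`, then `u p` specializes to `u x`, which in the
Scott topology means `u x ≤ u p`. Hence any upper bound `a` of the values `u p`, for `u` in a family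
of continuous functions, extends to a continuous upper bound of the whole family: the function
equal to `a` on `closure {p}` and to `⊤` elsewhere. A least continuous upper bound lies below all
of these, so its value at `p` is below every such `a`.
-/

open Set

theorem scott_specializes_iff_le {Z : Type*} [Preorder Z] [TopologicalSpace Z]
    [Topology.IsScott Z univ] {a b : Z} : a ⤳ b ↔ b ≤ a := by
  rw [specializes_iff_mem_closure, Topology.IsScott.closure_singleton, mem_Iic]

section ClosureStep

variable {X Z : Type*} [TopologicalSpace X]

open scoped Classical in
/-- The step function with value `a` on `closure {p}` and `⊤` elsewhere: the candidate upper bound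
that tests the value at `p` of a least continuous upper bound. -/
noncomputable def closureStep [Top Z] (p : X) (a : Z) : X → Z :=
  (closure {p}).piecewise (fun _ => a) (fun _ => ⊤)

theorem closureStep_self [Top Z] (p : X) (a : Z) : closureStep p a p = a := by
  classical
  exact piecewise_eq_of_mem _ _ _ (subset_closure rfl)

theorem continuous_closureStep [Top Z] [TopologicalSpace Z] {a : Z} (ha : ⊤ ⤳ a) (p : X) :
    Continuous (closureStep p a) := by
  classical
  exact isClosed_closure.continuous_piecewise_of_specializes continuous_const
    continuous_const fun _ => ha

theorem le_closureStep [Preorder Z] [OrderTop Z] {u : X → Z} {p : X} {a : Z}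
    (hu : ∀ x, p ⤳ x → u x ≤ u p) (hup : u p ≤ a) : u ≤ closureStep p a := by
  classical
  exact le_piecewise (fun x hx => (hu x (specializes_iff_mem_closure.mpr hx)).trans hup)
    fun _ _ => le_top

end ClosureStep

section LeastContinuousUpperBound

variable {X Z : Type*} [TopologicalSpace X] [TopologicalSpace Z]

theorem isLUB_of_isLeast_continuous_upperBounds [Preorder Z] [OrderTop Z]
    (hZ : ∀ a b : Z, a ⤳ b ↔ b ≤ a) {S : Set (X → Z)} (hS : ∀ u ∈ S, Continuous u) {h : X → Z}
    (hh : IsLeast {k | Continuous k ∧ k ∈ upperBounds S} h) : IsLUB S h := by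
  refine ⟨hh.1.2, fun b hb p => ?_⟩
  have hstep : closureStep p (b p) ∈ upperBounds S := fun u hu =>
    le_closureStep (fun x hx => (hZ _ _).mp (hx.map (hS u hu))) (hb hu p)
  have hle : h ≤ closureStep p (b p) :=
    hh.2 ⟨continuous_closureStep ((hZ _ _).mpr le_top) p, hstep⟩
  exact (hle p).trans_eq (closureStep_self p (b p))

theorem stmt_10_general [PartialOrder Z] [OrderTop Z] (hZ : ∀ a b : Z, a ⤳ b ↔ b ≤ a)
    {S : Set (X → Z)} (hS : ∀ u ∈ S, Continuous u) {h : X → Z} (hh : IsLUB S h) :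
    ((∃ k, IsLeast {k | Continuous k ∧ k ∈ upperBounds S} k) ↔ Continuous h) ∧
      (Continuous h → IsLeast {k | Continuous k ∧ k ∈ upperBounds S} h) := by
  have isLeast_of_continuous (hc : Continuous h) :
      IsLeast {k | Continuous k ∧ k ∈ upperBounds S} h :=
    ⟨⟨hc, hh.1⟩, fun _ hk => hh.2 hk.2⟩
  refine ⟨⟨fun ⟨k, hk⟩ => ?_, fun hc => ⟨h, isLeast_of_continuous hc⟩⟩, isLeast_of_continuous⟩
  rw [hh.unique (isLUB_of_isLeast_continuous_upperBounds hZ hS hk)]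
  exact hk.1.1

end LeastContinuousUpperBound

/-- Let `X` be a topological space, `Z` a complete lattice, and `f, g : X → Z` continuous with
respect to the topology on `X` and the Scott topology on `Z`. Then the following are
equivalent: (1) `{f, g}` has a least upper bound in the poset of continuous functions from
`X` to `Z` (Scott topology on `Z`), ordered pointwise; (2) the pointwise supremum
`h x = f x ⊔ g x` is continuous. Moreover, if these conditions hold, then the pointwise
supremum is the least upper bound of `{f, g}` in the poset of continuous functions. -/
theorem stmt_10 (X Z : Type) [TopologicalSpace X] [CompleteLattice Z] (f g : X → Z)
    (hf : @Continuous X Z _ (Topology.scott Z Set.univ) f)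
    (hg : @Continuous X Z _ (Topology.scott Z Set.univ) g) :
    ((∃ h : X → Z, @Continuous X Z _ (Topology.scott Z Set.univ) h ∧
        f ≤ h ∧ g ≤ h ∧
        ∀ k : X → Z, @Continuous X Z _ (Topology.scott Z Set.univ) k →
          f ≤ k → g ≤ k → h ≤ k) ↔
      @Continuous X Z _ (Topology.scott Z Set.univ) (fun x => f x ⊔ g x)) ∧
    (@Continuous X Z _ (Topology.scott Z Set.univ) (fun x => f x ⊔ g x) →
      (f ≤ fun x => f x ⊔ g x) ∧ (g ≤ fun x => f x ⊔ g x) ∧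
      ∀ k : X → Z, @Continuous X Z _ (Topology.scott Z Set.univ) k →
        f ≤ k → g ≤ k → (fun x => f x ⊔ g x) ≤ k) := by
  let _ : TopologicalSpace Z := Topology.scott Z univ
  have : Topology.IsScott Z univ := ⟨rfl⟩
  have hfg : ∀ u ∈ ({f, g} : Set (X → Z)), Continuous u := by simp [hf, hg]
  have hgen := stmt_10_general (fun _ _ => scott_specializes_iff_le) hfg isLUB_pair
  simp only [IsLeast, upperBounds_insert, upperBounds_singleton, mem_lowerBounds, mem_ofPred_eq,
    mem_inter_iff, mem_Ici, and_imp, and_assoc] at hgen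
  exact ⟨hgen.1, fun hc => (hgen.2 hc).2⟩
end

section
/- Let X be a topological space, Z a complete lattice carrying the Scott topology, and f, g : X → Z continuous functions. For every point x₀ ∈ X, the step function s : X → Z defined by s(x) = f(x₀) ⊔ g(x₀) if x lies in the closure of {x₀}, and s(x) = ⊤ (the top element of Z) otherwise, is continuous with respect to the topology on X and the Scott topology on Z, satisfies f(x) ≤ s(x) and g(x) ≤ s(x) for all x ∈ X, and satisfies s(x₀) = f(x₀) ⊔ g(x₀). -/
/-!
In the specialization preorder, `a ⤳ b` means that every open set containing `b` contains `a`.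
For the Scott topology this is `b ≤ a`, and continuous maps preserve `⤳`, so `f x ≤ f x₀` on
`closure {x₀}`. A function with the value `b` on a closed set and `⊤` off it is continuous because
`⊤ ⤳ b`.
-/

section Specialization

variable {X Z : Type*} [TopologicalSpace X] [TopologicalSpace Z] [Preorder Z]

theorem le_of_specializes [ClosedIicTopology Z] {a b : Z} (h : a ⤳ b) : b ≤ a :=
  h.mem_closed isClosed_Iic Set.self_mem_Iic

theorem specializes_of_le_of_isScott (D : Set (Set Z)) [Topology.IsScott Z D] {a b : Z}
    (h : b ≤ a) : a ⤳ b :=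
  specializes_iff_forall_open.2 fun _ hU hb =>
    Topology.IsScott.isUpperSet_of_isOpen (D := D) hU h hb

variable [OrderTop Z]

theorem le_ite_mem_closure_singleton_top [ClosedIicTopology Z] {f : X → Z} (hf : Continuous f)
    {x₀ : X} [∀ x, Decidable (x ∈ closure {x₀})] {b : Z} (hb : f x₀ ≤ b) (x : X) :
    f x ≤ if x ∈ closure {x₀} then b else ⊤ := by
  split_ifs with hx
  · exact (le_of_specializes ((specializes_iff_mem_closure.2 hx).map hf)).trans hb
  · exact le_top

theorem continuous_ite_mem_top_of_isClosed (D : Set (Set Z)) [Topology.IsScott Z D] {C : Set X}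
    [∀ x, Decidable (x ∈ C)] (hC : IsClosed C) (b : Z) :
    Continuous fun x => if x ∈ C then b else ⊤ :=
  hC.continuous_piecewise_of_specializes continuous_const continuous_const fun _ =>
    specializes_of_le_of_isScott D le_top

end Specialization

theorem stmt_11_general {X Z : Type*} [TopologicalSpace X] [TopologicalSpace Z] [SemilatticeSup Z]
    [OrderTop Z] [Topology.IsScott Z Set.univ] {f g : X → Z} (hf : Continuous f)
    (hg : Continuous g) (x₀ : X) [∀ x, Decidable (x ∈ closure {x₀})] :
    Continuous (fun x => if x ∈ closure {x₀} then f x₀ ⊔ g x₀ else ⊤) ∧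
    (∀ x : X, f x ≤ if x ∈ closure {x₀} then f x₀ ⊔ g x₀ else ⊤) ∧
    (∀ x : X, g x ≤ if x ∈ closure {x₀} then f x₀ ⊔ g x₀ else ⊤) ∧
    (if x₀ ∈ closure {x₀} then f x₀ ⊔ g x₀ else ⊤) = f x₀ ⊔ g x₀ :=
  ⟨continuous_ite_mem_top_of_isClosed Set.univ isClosed_closure _,
    le_ite_mem_closure_singleton_top hf le_sup_left,
    le_ite_mem_closure_singleton_top hg le_sup_right,
    if_pos (subset_closure (Set.mem_singleton x₀))⟩

open Classical in
/-- Let `X` be a topological space, `Z` a complete lattice carrying the Scott topology, and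
`f, g : X → Z` continuous. For every `x₀ ∈ X`, the step function `s` with
`s x = f x₀ ⊔ g x₀` for `x` in the closure of `{x₀}` and `s x = ⊤` otherwise is continuous,
dominates `f` and `g` pointwise, and satisfies `s x₀ = f x₀ ⊔ g x₀`. -/
theorem stmt_11 (X Z : Type) [TopologicalSpace X] [CompleteLattice Z] (f g : X → Z)
    (hf : @Continuous X Z _ (Topology.scott Z Set.univ) f)
    (hg : @Continuous X Z _ (Topology.scott Z Set.univ) g) (x₀ : X) :
    @Continuous X Z _ (Topology.scott Z Set.univ)
      (fun x => if x ∈ closure {x₀} then f x₀ ⊔ g x₀ else ⊤) ∧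
    (∀ x : X, f x ≤ if x ∈ closure {x₀} then f x₀ ⊔ g x₀ else ⊤) ∧
    (∀ x : X, g x ≤ if x ∈ closure {x₀} then f x₀ ⊔ g x₀ else ⊤) ∧
    (if x₀ ∈ closure {x₀} then f x₀ ⊔ g x₀ else ⊤) = f x₀ ⊔ g x₀ := by
  let : TopologicalSpace Z := Topology.scott Z Set.univ
  have : Topology.IsScott Z Set.univ := ⟨rfl⟩
  exact stmt_11_general hf hg x₀
end

section
/- Let X₁ be the set {⊥} ∪ (ℕ × (ℕ ∪ {ω})) ∪ {⊤} equipped with a partial order ≤ characterized by: ⊥ ≤ x and x ≤ ⊤ for all x, and for i, j ∈ ℕ and p, q ∈ ℕ ∪ {ω}, (i, p) ≤ (j, q) if and only if (i = j and p ≤ q) or (i ≤ j and q = ω). Then X₁ is a complete lattice: every subset S ⊆ X₁ has a least upper bound. -/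
/-- The carrier `{⊥} ∪ (ℕ × (ℕ ∪ {ω})) ∪ {⊤}`, realized as `WithBot (WithTop (ℕ × ℕ∞))`. -/
abbrev ModJohnstone : Type := WithBot (WithTop (ℕ × ℕ∞))

/-- The element `(i, q) ∈ ℕ × (ℕ ∪ {ω})` of the carrier. -/
def ModJohnstone.pair (i : ℕ) (q : ℕ∞) : ModJohnstone :=
  ((((i, q) : ℕ × ℕ∞) : WithTop (ℕ × ℕ∞)) : WithBot (WithTop (ℕ × ℕ∞)))

/-- The element `⊤` of the carrier. -/
def ModJohnstone.top : ModJohnstone := ((⊤ : WithTop (ℕ × ℕ∞)) : WithBot (WithTop (ℕ × ℕ∞)))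

/-- The element `⊥` of the carrier. -/
def ModJohnstone.bot : ModJohnstone := (⊥ : WithBot (WithTop (ℕ × ℕ∞)))

/-! A nonempty set of pairs that is bounded above has a supremum: its first coordinate is the
supremum `i` of the first coordinates, and its second coordinate is the supremum of the second
coordinates if the set lies in the single column `i`, and `⊤` otherwise, since only the top of a
column dominates anything from another column. The two extra points then serve as suprema of the
empty set and of the unbounded sets. -/

/-- Pairs `(i, q)` forming columns indexed by `ι`, each a copy of `κ`. A separate structure, because
the order on them below is neither the product order nor the lexicographic order on `ι × κ`. -/
@[ext]
structure ColumnPair (ι κ : Type*) where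
  fst : ι
  snd : κ

namespace ColumnPair

variable {ι κ : Type*}

section PartialOrder

variable [PartialOrder ι] [PartialOrder κ] [OrderTop κ]

/-- The order of `κ` inside each column; across columns, only the tops lie above anything. -/
instance : PartialOrder (ColumnPair ι κ) where
  le x y := (x.fst = y.fst ∧ x.snd ≤ y.snd) ∨ (x.fst ≤ y.fst ∧ y.snd = ⊤)
  le_refl _ := Or.inl ⟨rfl, le_rfl⟩
  le_trans := by
    rintro x y z (⟨hxy, hxy'⟩ | ⟨hxy, hy⟩) (⟨hyz, hyz'⟩ | ⟨hyz, hz⟩)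
    · exact Or.inl ⟨hxy.trans hyz, hxy'.trans hyz'⟩
    · exact Or.inr ⟨hxy.le.trans hyz, hz⟩
    · exact Or.inr ⟨hxy.trans hyz.le, top_le_iff.mp (hy ▸ hyz')⟩
    · exact Or.inr ⟨hxy.trans hyz, hz⟩
  le_antisymm := by
    rintro x y (⟨hxy, hxy'⟩ | ⟨hxy, hy⟩) (⟨hyx, hyx'⟩ | ⟨hyx, hx⟩)
    · exact ColumnPair.ext hxy (hxy'.antisymm hyx')
    · exact ColumnPair.ext hxy (hxy'.antisymm (hx ▸ le_top))
    · exact ColumnPair.ext hyx.symm (le_antisymm (hy ▸ le_top) hyx')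
    · exact ColumnPair.ext (hxy.antisymm hyx) (hx.trans hy.symm)

theorem le_def {x y : ColumnPair ι κ} :
    x ≤ y ↔ (x.fst = y.fst ∧ x.snd ≤ y.snd) ∨ (x.fst ≤ y.fst ∧ y.snd = ⊤) :=
  Iff.rfl

theorem monotone_fst : Monotone (fst : ColumnPair ι κ → ι) := by
  rintro x y (⟨hfst, -⟩ | ⟨hfst, -⟩)
  · exact hfst.le
  · exact hfst

theorem isLUB_mk_of_forall_fst_eq {T : Set (ColumnPair ι κ)} {i : ι} {q : κ} (hT : T.Nonempty)
    (hi : ∀ x ∈ T, x.fst = i) (hq : IsLUB (snd '' T) q) : IsLUB T ⟨i, q⟩ := by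
  refine ⟨fun x hx => Or.inl ⟨hi x hx, hq.1 (Set.mem_image_of_mem snd hx)⟩, fun u hu => ?_⟩
  obtain ⟨x₀, hx₀⟩ := hT
  by_cases htop : u.snd = ⊤
  · exact Or.inr ⟨(hi x₀ hx₀).symm.trans_le (monotone_fst (hu hx₀)), htop⟩
  · have same_column : ∀ x ∈ T, x.fst = u.fst ∧ x.snd ≤ u.snd := fun x hx =>
      (le_def.mp (hu hx)).resolve_right fun h => htop h.2
    refine Or.inl ⟨(hi x₀ hx₀).symm.trans (same_column x₀ hx₀).1, hq.2 ?_⟩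
    exact Set.forall_mem_image.mpr fun x hx => (same_column x hx).2

theorem isLUB_mk_top {T : Set (ColumnPair ι κ)} {i : ι} (hi : IsLUB (fst '' T) i)
    (hne : ∃ x ∈ T, x.fst ≠ i) : IsLUB T ⟨i, ⊤⟩ := by
  refine ⟨fun x hx => Or.inr ⟨hi.1 (Set.mem_image_of_mem fst hx), rfl⟩, fun u hu => ?_⟩
  have hiu : i ≤ u.fst := hi.2 (monotone_fst.mem_upperBounds_image hu)
  obtain ⟨x, hx, hxi⟩ := hne
  rcases le_def.mp (hu hx) with ⟨hxu, -⟩ | ⟨-, htop⟩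
  · exact absurd ((hi.1 (Set.mem_image_of_mem fst hx)).antisymm (hxu ▸ hiu)) hxi
  · exact Or.inr ⟨hiu, htop⟩

end PartialOrder

theorem exists_isLUB [ConditionallyCompleteLattice ι] [CompleteLattice κ]
    {T : Set (ColumnPair ι κ)} (hT : T.Nonempty) (hbdd : BddAbove T) : ∃ a, IsLUB T a := by
  have hfst : IsLUB (fst '' T) (sSup (fst '' T)) :=
    isLUB_csSup (hT.image fst) (monotone_fst.map_bddAbove hbdd)
  by_cases hcol : ∀ x ∈ T, x.fst = sSup (fst '' T)
  · exact ⟨_, isLUB_mk_of_forall_fst_eq hT hcol (isLUB_sSup _)⟩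
  · push Not at hcol
    exact ⟨_, isLUB_mk_top hfst hcol⟩

end ColumnPair

section AdjoinBounds

variable {α β : Type*} [Preorder α] [LE β] {b t : α} {f : β → α}

theorem eq_or_exists_le_of_mem_upperBounds_image (hb : IsBot b) (hf : ∀ x y, f x ≤ f y ↔ x ≤ y)
    (hcover : ∀ x, x = b ∨ x = t ∨ x ∈ Set.range f) {T : Set β} (hT : T.Nonempty) {u : α}
    (hu : u ∈ upperBounds (f '' T)) : u = t ∨ ∃ y ∈ upperBounds T, f y ≤ u := by
  have le_u : ∀ z ∈ T, f z ≤ u := fun z hz => hu (Set.mem_image_of_mem f hz)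
  rcases hcover u with rfl | rfl | ⟨y, rfl⟩
  · obtain ⟨y, hy⟩ := hT
    exact Or.inr ⟨y, fun z hz => (hf z y).mp ((le_u z hz).trans (hb _)), le_u y hy⟩
  · exact Or.inl rfl
  · exact Or.inr ⟨y, fun z hz => (hf z y).mp (le_u z hz), le_rfl⟩

theorem exists_isLUB_image (hb : IsBot b) (ht : IsTop t) (hf : ∀ x y, f x ≤ f y ↔ x ≤ y)
    (hcover : ∀ x, x = b ∨ x = t ∨ x ∈ Set.range f)
    (hβ : ∀ T : Set β, T.Nonempty → BddAbove T → ∃ a, IsLUB T a) (T : Set β) :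
    ∃ a, IsLUB (f '' T) a := by
  rcases T.eq_empty_or_nonempty with rfl | hT
  · exact ⟨b, by simp, fun u _ => hb u⟩
  by_cases hbdd : BddAbove T
  · obtain ⟨a, ha⟩ := hβ T hT hbdd
    refine ⟨f a, Set.forall_mem_image.mpr fun y hy => (hf y a).mpr (ha.1 hy), fun u hu => ?_⟩
    rcases eq_or_exists_le_of_mem_upperBounds_image hb hf hcover hT hu with rfl | ⟨y, hy, hyu⟩
    · exact ht _
    · exact ((hf a y).mpr (ha.2 hy)).trans hyu
  · refine ⟨t, fun x _ => ht x, fun u hu => ?_⟩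
    rcases eq_or_exists_le_of_mem_upperBounds_image hb hf hcover hT hu with rfl | ⟨y, hy, -⟩
    · exact le_rfl
    · exact absurd ⟨y, hy⟩ hbdd

theorem exists_isLUB_of_isBot_of_isTop (hb : IsBot b) (ht : IsTop t)
    (hf : ∀ x y, f x ≤ f y ↔ x ≤ y) (hcover : ∀ x, x = b ∨ x = t ∨ x ∈ Set.range f)
    (hβ : ∀ T : Set β, T.Nonempty → BddAbove T → ∃ a, IsLUB T a) (S : Set α) :
    ∃ a, IsLUB S a := by
  by_cases htS : t ∈ S
  · exact ⟨t, fun x _ => ht x, fun _ hu => hu htS⟩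
  obtain ⟨a, ha⟩ := exists_isLUB_image hb ht hf hcover hβ (f ⁻¹' S)
  refine ⟨a, fun x hx => ?_, fun u hu => ha.2 (Set.forall_mem_image.mpr fun _ hy => hu hy)⟩
  rcases hcover x with rfl | rfl | ⟨y, rfl⟩
  · exact hb a
  · exact absurd hx htS
  · exact ha.1 (Set.mem_image_of_mem f hx)

end AdjoinBounds

theorem stmt_13_general {ι κ : Type*} [ConditionallyCompleteLattice ι] [CompleteLattice κ]
    (p : Preorder (WithBot (WithTop (ι × κ))))
    (hbot : ∀ x, p.le ⊥ x)
    (htop : ∀ x, p.le x ((⊤ : WithTop (ι × κ)) : WithBot (WithTop (ι × κ))))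
    (hpair : ∀ (i j : ι) (q r : κ),
      p.le (((i, q) : WithTop (ι × κ)) : WithBot (WithTop (ι × κ)))
          (((j, r) : WithTop (ι × κ)) : WithBot (WithTop (ι × κ))) ↔
        ((i = j ∧ q ≤ r) ∨ (i ≤ j ∧ r = ⊤))) :
    ∀ S : Set (WithBot (WithTop (ι × κ))), ∃ a, @IsLUB _ p.toLE S a := by
  let embed (x : ColumnPair ι κ) : WithBot (WithTop (ι × κ)) :=
    (((x.fst, x.snd) : WithTop (ι × κ)) : WithBot (WithTop (ι × κ)))
  have hcover : ∀ x, x = ⊥ ∨ x = ((⊤ : WithTop (ι × κ)) : WithBot (WithTop (ι × κ))) ∨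
      x ∈ Set.range embed := by
    rintro (_ | _ | ⟨i, q⟩)
    · exact Or.inl rfl
    · exact Or.inr (Or.inl rfl)
    · exact Or.inr (Or.inr ⟨⟨i, q⟩, rfl⟩)
  exact exists_isLUB_of_isBot_of_isTop hbot htop (fun x y => hpair x.fst y.fst x.snd y.snd) hcover
    fun _ => ColumnPair.exists_isLUB

/-- Let `X₁ = {⊥} ∪ (ℕ × (ℕ ∪ {ω})) ∪ {⊤}` with a partial order characterized by: `⊥ ≤ x` and
`x ≤ ⊤` for all `x`, and `(i, p) ≤ (j, q)` iff (`i = j` and `p ≤ q`) or (`i ≤ j` and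
`q = ω`). Then `X₁` is a complete lattice: every subset has a least upper bound. -/
theorem stmt_13 (p : PartialOrder ModJohnstone)
    (hbot : ∀ x : ModJohnstone, p.le ModJohnstone.bot x)
    (htop : ∀ x : ModJohnstone, p.le x ModJohnstone.top)
    (hpair : ∀ (i j : ℕ) (q r : ℕ∞),
      p.le (ModJohnstone.pair i q) (ModJohnstone.pair j r) ↔
        ((i = j ∧ q ≤ r) ∨ (i ≤ j ∧ r = ⊤))) :
    ∀ S : Set ModJohnstone, ∃ a : ModJohnstone, @IsLUB ModJohnstone p.toPreorder.toLE S a :=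
  stmt_13_general p.toPreorder hbot htop hpair
end

section
/- Let X₁ be the set {⊥} ∪ (ℕ × (ℕ ∪ {ω})) ∪ {⊤} with the partial order ≤ characterized by: ⊥ ≤ x and x ≤ ⊤ for all x, and (i, p) ≤ (j, q) iff (i = j and p ≤ q) or (i ≤ j and q = ω). For every n ∈ ℕ and every function f : ℕ → ℕ, the set V_f = { (i, j) ∈ ℕ × (ℕ ∪ {ω}) : i ≥ n and f(i) ≤ j } ∪ {⊤} is open in the Scott topology on X₁. -/
/-!
Call a set inaccessible if it meets every nonempty directed set whose supremum it contains. For an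
upper set `V` this holds as soon as, for every non-minimal `x ∉ V`, there is a greatest element
`u ∉ V` above `x`: a directed set which misses `V` and contains `x` is bounded by `u ∉ V`, and so
its supremum is not in `V`. For `V = V_f` and `x = (i, q)` outside it, the elements above `x`
outside `V_f` have greatest element `(n - 1, ω)` if `i < n`, and `(i, f i - 1)` if `n ≤ i`. Only
the predecessors of `n` and of the values of `f` matter, so `ℕ` and `ℕ ∪ {ω}` can be replaced by
linear orders in which `n` and these values are not limits.
-/

open Set Order Topology

theorem dirSupInacc_of_exists_isGreatest_Ici_diff {α : Type*} [Preorder α] {V : Set α}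
    (hV : IsUpperSet V) (h : ∀ x ∉ V, ¬ IsMin x → ∃ u, IsGreatest (Ici x \ V) u) :
    DirSupInacc V := by
  intro D hne hdir a ha haV
  by_contra hDV
  have hD : ∀ d ∈ D, d ∉ V := fun d hd hdV ↦ hDV ⟨d, hd, hdV⟩
  suffices hbdd : ∃ u ∉ V, u ∈ upperBounds D by
    obtain ⟨u, huV, hu⟩ := hbdd
    exact huV (hV (ha.2 hu) haV)
  by_cases hmin : ∀ d ∈ D, IsMin d
  · obtain ⟨d, hd⟩ := hne
    refine ⟨d, hD d hd, fun e he ↦ ?_⟩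
    obtain ⟨c, hc, hdc, hec⟩ := hdir d hd e he
    exact hec.trans (hmin c hc hdc)
  · push Not at hmin
    obtain ⟨x, hx, hxmin⟩ := hmin
    obtain ⟨u, hu, hmax⟩ := h x (hD x hx) hxmin
    refine ⟨u, hu.2, fun e he ↦ ?_⟩
    obtain ⟨c, hc, hxc, hec⟩ := hdir x hx e he
    exact hec.trans (hmax ⟨hxc, hD c hc⟩)

theorem exists_covBy_of_lt_of_not_isSuccLimit {α : Type*} [Preorder α] {a b : α}
    (hab : a < b) (hb : ¬ IsSuccLimit b) : ∃ m, m ⋖ b :=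
  not_isSuccPrelimit_iff.1 fun h ↦ hb ⟨not_isMin_of_lt hab, h⟩

/-- The partial order `α` is `{bot} ∪ (ι × κ) ∪ {top}`, where `pair i q` is the point `(i, q)` and
the order is that of `X₁`, with the greatest element of `κ` in the role of `ω`. The set `X₁` itself
is the case `ι = ℕ`, `κ = ℕ ∪ {ω}`. -/
structure IsModJohnstone {α ι κ : Type*} [PartialOrder α] [Preorder ι] [Preorder κ] [OrderTop κ]
    (bot top : α) (pair : ι → κ → α) : Prop where
  isBot : IsBot bot
  isTop : IsTop top
  pair_le_pair_iff : ∀ i j q r, pair i q ≤ pair j r ↔ (i = j ∧ q ≤ r) ∨ (i ≤ j ∧ r = ⊤)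
  pair_ne_bot : ∀ i q, pair i q ≠ bot
  pair_ne_top : ∀ i q, pair i q ≠ top
  eq_bot_or_eq_top_or_eq_pair : ∀ x, x = bot ∨ x = top ∨ ∃ i q, x = pair i q

/-- The set `V_f` of the points `(i, j)` with `n ≤ i` on or above the graph of `f`, together with
`top`. -/
def aboveGraph {α ι κ : Type*} [LE ι] [LE κ] (top : α) (pair : ι → κ → α) (n : ι) (f : ι → κ) :
    Set α :=
  {x | ∃ i j, n ≤ i ∧ f i ≤ j ∧ x = pair i j} ∪ {top}

namespace IsModJohnstone

section Preorder

variable {α ι κ : Type*} [PartialOrder α] [Preorder ι] [Preorder κ] [OrderTop κ]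
  {bot top : α} {pair : ι → κ → α} {n i j : ι} {q r : κ} {f : ι → κ}

theorem le_and_le_of_pair_le_pair (h : IsModJohnstone bot top pair) (hle : pair i q ≤ pair j r)
    (hi : n ≤ i) (hq : f i ≤ q) : n ≤ j ∧ f j ≤ r := by
  rcases (h.pair_le_pair_iff i j q r).1 hle with ⟨rfl, hqr⟩ | ⟨hij, rfl⟩
  · exact ⟨hi, hq.trans hqr⟩
  · exact ⟨hi.trans hij, le_top⟩

theorem pair_mem_aboveGraph (h : IsModJohnstone bot top pair) :
    pair i q ∈ aboveGraph top pair n f ↔ n ≤ i ∧ f i ≤ q := by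
  constructor
  · rintro (⟨j, r, hj, hr, heq⟩ | heq)
    · exact h.le_and_le_of_pair_le_pair heq.ge hj hr
    · exact absurd heq (h.pair_ne_top i q)
  · rintro ⟨hi, hq⟩
    exact Or.inl ⟨i, q, hi, hq, rfl⟩

theorem eq_top_or_eq_pair_of_pair_le (h : IsModJohnstone bot top pair) {y : α}
    (hy : pair i q ≤ y) : y = top ∨ ∃ j r, y = pair j r ∧ ((i = j ∧ q ≤ r) ∨ (i ≤ j ∧ r = ⊤)) := by
  rcases h.eq_bot_or_eq_top_or_eq_pair y with rfl | rfl | ⟨j, r, rfl⟩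
  · exact absurd (hy.antisymm (h.isBot _)) (h.pair_ne_bot i q)
  · exact Or.inl rfl
  · exact Or.inr ⟨j, r, rfl, (h.pair_le_pair_iff i j q r).1 hy⟩

theorem isUpperSet_aboveGraph (h : IsModJohnstone bot top pair) :
    IsUpperSet (aboveGraph top pair n f) := by
  rintro a b hab (⟨i, q, hi, hq, rfl⟩ | rfl)
  · rcases h.eq_top_or_eq_pair_of_pair_le hab with rfl | ⟨j, r, rfl, -⟩
    · exact Or.inr rfl
    · exact h.pair_mem_aboveGraph.2 (h.le_and_le_of_pair_le_pair hab hi hq)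
  · exact Or.inr ((h.isTop b).antisymm hab)

end Preorder

theorem isGreatest_Ici_diff_of_lt {α ι κ : Type*} [PartialOrder α] [LinearOrder ι]
    [Preorder κ] [OrderTop κ] {bot top : α} {pair : ι → κ → α} {n m i : ι} {q : κ} {f : ι → κ}
    (h : IsModJohnstone bot top pair) (hm : m ⋖ n) (hi : i < n) :
    IsGreatest (Ici (pair i q) \ aboveGraph top pair n f) (pair m ⊤) := by
  refine ⟨⟨(h.pair_le_pair_iff _ _ _ _).2 (Or.inr ⟨hm.le_of_lt hi, rfl⟩),
    fun hmem ↦ hm.lt.not_ge (h.pair_mem_aboveGraph.1 hmem).1⟩, ?_⟩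
  rintro y ⟨hy, hyV⟩
  rcases h.eq_top_or_eq_pair_of_pair_le hy with rfl | ⟨j, r, rfl, hjr⟩
  · exact absurd (Or.inr rfl) hyV
  have hj : j < n := by
    rcases hjr with ⟨rfl, -⟩ | ⟨-, rfl⟩
    · exact hi
    · exact not_le.1 fun hnj ↦ hyV (h.pair_mem_aboveGraph.2 ⟨hnj, le_top⟩)
  exact (h.pair_le_pair_iff _ _ _ _).2 (Or.inr ⟨hm.le_of_lt hj, rfl⟩)

theorem isGreatest_Ici_diff_of_le {α ι κ : Type*} [PartialOrder α] [Preorder ι]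
    [LinearOrder κ] [OrderTop κ] {bot top : α} {pair : ι → κ → α} {n i : ι} {q m : κ} {f : ι → κ}
    (h : IsModJohnstone bot top pair) (hi : n ≤ i) (hm : m ⋖ f i) (hq : q < f i) :
    IsGreatest (Ici (pair i q) \ aboveGraph top pair n f) (pair i m) := by
  refine ⟨⟨(h.pair_le_pair_iff _ _ _ _).2 (Or.inl ⟨rfl, hm.le_of_lt hq⟩),
    fun hmem ↦ hm.lt.not_ge (h.pair_mem_aboveGraph.1 hmem).2⟩, ?_⟩
  rintro y ⟨hy, hyV⟩
  rcases h.eq_top_or_eq_pair_of_pair_le hy with rfl | ⟨j, r, rfl, ⟨rfl, -⟩ | ⟨hij, rfl⟩⟩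
  · exact absurd (Or.inr rfl) hyV
  · have hr : r < f i := not_le.1 fun hfr ↦ hyV (h.pair_mem_aboveGraph.2 ⟨hi, hfr⟩)
    exact (h.pair_le_pair_iff _ _ _ _).2 (Or.inl ⟨rfl, hm.le_of_lt hr⟩)
  · exact absurd (h.pair_mem_aboveGraph.2 ⟨hi.trans hij, le_top⟩) hyV

theorem exists_isGreatest_Ici_diff {α ι κ : Type*} [PartialOrder α] [LinearOrder ι]
    [LinearOrder κ] [OrderTop κ] {bot top : α} {pair : ι → κ → α} {n : ι} {f : ι → κ}
    (h : IsModJohnstone bot top pair) (hn : ¬ IsSuccLimit n)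
    (hf : ∀ i, n ≤ i → ¬ IsSuccLimit (f i)) {x : α} (hx : x ∉ aboveGraph top pair n f)
    (hmin : ¬ IsMin x) : ∃ u, IsGreatest (Ici x \ aboveGraph top pair n f) u := by
  rcases h.eq_bot_or_eq_top_or_eq_pair x with rfl | rfl | ⟨i, q, rfl⟩
  · exact absurd h.isBot.isMin hmin
  · exact absurd (Or.inr rfl) hx
  rcases lt_or_ge i n with hi | hi
  · obtain ⟨m, hm⟩ := exists_covBy_of_lt_of_not_isSuccLimit hi hn
    exact ⟨pair m ⊤, h.isGreatest_Ici_diff_of_lt hm hi⟩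
  · have hq : q < f i := not_le.1 fun hfq ↦ hx (h.pair_mem_aboveGraph.2 ⟨hi, hfq⟩)
    obtain ⟨m, hm⟩ := exists_covBy_of_lt_of_not_isSuccLimit hq (hf i hi)
    exact ⟨pair i m, h.isGreatest_Ici_diff_of_le hi hm hq⟩

end IsModJohnstone

theorem stmt_14_general {α ι κ : Type*} [PartialOrder α] [LinearOrder ι] [LinearOrder κ]
    [OrderTop κ] {bot top : α} {pair : ι → κ → α} (h : IsModJohnstone bot top pair) {n : ι}
    {f : ι → κ} (hn : ¬ IsSuccLimit n) (hf : ∀ i, n ≤ i → ¬ IsSuccLimit (f i)) :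
    IsOpen[Topology.scott α univ] (aboveGraph top pair n f) := by
  let : TopologicalSpace α := Topology.scott α univ
  have : IsScott α univ := ⟨rfl⟩
  rw [IsScott.isOpen_iff_isUpperSet_and_dirSupInaccOn (D := univ), dirSupInaccOn_univ]
  exact ⟨h.isUpperSet_aboveGraph,
    dirSupInacc_of_exists_isGreatest_Ici_diff h.isUpperSet_aboveGraph
      fun _ hx hmin ↦ h.exists_isGreatest_Ici_diff hn hf hx hmin⟩

namespace ModJohnstone

theorem pair_ne_bot (i : ℕ) (q : ℕ∞) : pair i q ≠ bot :=
  WithBot.coe_ne_bot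

theorem pair_ne_top (i : ℕ) (q : ℕ∞) : pair i q ≠ top :=
  fun h ↦ WithTop.coe_ne_top (WithBot.coe_injective h)

theorem eq_bot_or_eq_top_or_eq_pair : ∀ x : ModJohnstone, x = bot ∨ x = top ∨ ∃ i q, x = pair i q
  | ⊥ => Or.inl rfl
  | (⊤ : WithTop (ℕ × ℕ∞)) => Or.inr (Or.inl rfl)
  | ((i, q) : ℕ × ℕ∞) => Or.inr (Or.inr ⟨i, q, rfl⟩)

end ModJohnstone

/-- Let `X₁ = {⊥} ∪ (ℕ × (ℕ ∪ {ω})) ∪ {⊤}` with the partial order characterized by: `⊥ ≤ x`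
and `x ≤ ⊤` for all `x`, and `(i, p) ≤ (j, q)` iff (`i = j` and `p ≤ q`) or (`i ≤ j` and
`q = ω`). For every `n ∈ ℕ` and every `f : ℕ → ℕ`, the set
`V_f = {(i, j) : i ≥ n and f i ≤ j} ∪ {⊤}` is open in the Scott topology on `X₁`. -/
theorem stmt_14 (p : PartialOrder ModJohnstone)
    (hbot : ∀ x : ModJohnstone, p.le ModJohnstone.bot x)
    (htop : ∀ x : ModJohnstone, p.le x ModJohnstone.top)
    (hpair : ∀ (i j : ℕ) (q r : ℕ∞),
      p.le (ModJohnstone.pair i q) (ModJohnstone.pair j r) ↔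
        ((i = j ∧ q ≤ r) ∨ (i ≤ j ∧ r = ⊤)))
    (n : ℕ) (f : ℕ → ℕ) :
    (@Topology.scott ModJohnstone Set.univ p.toPreorder).IsOpen
      ({x : ModJohnstone | ∃ (i : ℕ) (j : ℕ∞), n ≤ i ∧ (f i : ℕ∞) ≤ j ∧
          x = ModJohnstone.pair i j} ∪ {ModJohnstone.top}) :=
  stmt_14_general
    ⟨hbot, htop, hpair, ModJohnstone.pair_ne_bot, ModJohnstone.pair_ne_top,
      ModJohnstone.eq_bot_or_eq_top_or_eq_pair⟩
    not_isSuccLimit_of_isSuccArchimedean fun i _ ↦ not_isSuccLimit_natCast (f i)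
end

section
/- Let X₁ be the set {⊥} ∪ (ℕ × (ℕ ∪ {ω})) ∪ {⊤} with the partial order ≤ characterized by: ⊥ ≤ x and x ≤ ⊤ for all x, and (i, p) ≤ (j, q) iff (i = j and p ≤ q) or (i ≤ j and q = ω). Let X₂ be the collection of all Scott open subsets of X₁, partially ordered by set-theoretic inclusion. Then the set E = { (x₁, x₂) ∈ X₁ × X₂ : x₁ ∈ x₂ } is not open in the product topology on X₁ × X₂ of the Scott topology on X₁ and the Scott topology on X₂. -/
/-!
Call two elements disjoint if `⊥` is their only common lower bound. If `a` is a family of pairwise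
disjoint elements, any union of the ideals `Iic (a i)` is Scott closed, since a directed set inside
it stays in a single ideal. Hence `{⊥}ᶜ` is the directed join, over finite `s`, of the Scott open
sets obtained from it by removing the ideals `Iic (a i)` with `i ∉ s`.

If membership were open at `(x, {⊥}ᶜ)`, it would hold throughout some `V ×ˢ W`, where `W` contains
one of these smaller sets; so `V` would be a Scott open neighbourhood of `x` containing only
finitely many members of *any* pairwise disjoint family. But a Scott open neighbourhood of `⊤` in
`X₁` meets all but finitely many columns `{i} × ℕ`, and elements of distinct columns are disjoint.
-/

section ScottTopology

open Function Set Filter Topology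

theorem exists_mem_of_isOpen_of_isLUB_range {X ι : Type*} [Preorder X] [TopologicalSpace X]
    [IsScott X univ] [Nonempty ι] {U : Set X} (hU : IsOpen U) {f : ι → X}
    (hf : Directed (· ≤ ·) f) {x : X} (hx : IsLUB (range f) x) (hxU : x ∈ U) :
    ∃ i, f i ∈ U := by
  obtain ⟨-, hacc⟩ := (IsScott.isOpen_iff_isUpperSet_and_dirSupInaccOn (D := univ)).1 hU
  obtain ⟨_, ⟨i, rfl⟩, hi⟩ :=
    hacc (mem_univ _) (range_nonempty f) (directedOn_range.2 hf) hx hxU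
  exact ⟨i, hi⟩

variable {X ι : Type*} [PartialOrder X] [OrderBot X]

theorem dirSupClosed_biUnion_Iic_of_pairwiseDisjoint {a : ι → X} {s : Set ι}
    (ha : s.PairwiseDisjoint a) : DirSupClosed (⋃ i ∈ s, Iic (a i)) := by
  intro d hds hd_nonempty hd_directed c hc
  simp only [subset_def, mem_iUnion₂, mem_Iic, exists_prop] at hds ⊢
  by_cases hbot : ∀ x ∈ d, x = ⊥
  · obtain ⟨x, hx⟩ := hd_nonempty
    obtain ⟨i, hi, -⟩ := hds x hx
    exact ⟨i, hi, hc.2 fun y hy => (hbot y hy).trans_le bot_le⟩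
  · push Not at hbot
    obtain ⟨x, hx, hx_ne⟩ := hbot
    obtain ⟨i, hi, hxi⟩ := hds x hx
    refine ⟨i, hi, hc.2 fun y hy => ?_⟩
    obtain ⟨z, hz, hxz, hyz⟩ := hd_directed x hx y hy
    obtain ⟨j, hj, hzj⟩ := hds z hz
    have hij : i = j := ha.elim hi hj fun h => hx_ne (le_bot_iff.1 (h hxi (hxz.trans hzj)))
    exact hij ▸ hyz.trans hzj

variable [TopologicalSpace X] [IsScott X univ]

theorem isClosed_biUnion_Iic_of_pairwiseDisjoint {a : ι → X} {s : Set ι}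
    (ha : s.PairwiseDisjoint a) : IsClosed (⋃ i ∈ s, Iic (a i)) :=
  IsScott.isClosed_iff_isLowerSet_and_dirSupClosed.2
    ⟨isLowerSet_iUnion₂ fun i _ => isLowerSet_Iic (a i),
      dirSupClosed_biUnion_Iic_of_pairwiseDisjoint ha⟩

theorem isOpen_compl_singleton_bot : IsOpen ({⊥}ᶜ : Set X) := by
  simpa only [Iic_bot] using (isClosed_Iic (a := (⊥ : X))).isOpen_compl

/-- The open set `{⊥}ᶜ` with the ideals `Iic (a i)`, `i ∉ s`, removed. As `s` grows these sets
increase to `{⊥}ᶜ`. -/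
def complBotDiffIdeals {a : ι → X} (ha : Pairwise (Disjoint on a)) (s : Finset ι) :
    {U : Set X // IsOpen U} :=
  ⟨{⊥}ᶜ \ ⋃ i ∈ (s : Set ι)ᶜ, Iic (a i), isOpen_compl_singleton_bot.sdiff
    (isClosed_biUnion_Iic_of_pairwiseDisjoint (ha.set_pairwise _))⟩

theorem mem_complBotDiffIdeals {a : ι → X} {ha : Pairwise (Disjoint on a)} {s : Finset ι} {x : X} :
    x ∈ (complBotDiffIdeals ha s).val ↔ x ≠ ⊥ ∧ ∀ i, x ≤ a i → i ∈ s := by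
  simp [complBotDiffIdeals, imp.swap]

theorem monotone_complBotDiffIdeals {a : ι → X} (ha : Pairwise (Disjoint on a)) :
    Monotone (complBotDiffIdeals ha) := fun s t hst x hx => by
  rw [mem_complBotDiffIdeals] at hx ⊢
  exact ⟨hx.1, fun i hi => hst (hx.2 i hi)⟩

theorem isLUB_range_complBotDiffIdeals {a : ι → X} (ha : Pairwise (Disjoint on a)) :
    IsLUB (range (complBotDiffIdeals ha)) ⟨{⊥}ᶜ, isOpen_compl_singleton_bot⟩ := by
  refine ⟨?_, fun U hU x hx => ?_⟩
  · rintro _ ⟨s, rfl⟩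
    exact sdiff_subset
  · have hfin : {i | x ≤ a i}.Finite := Set.Subsingleton.finite fun i hi j hj =>
      ha.eq fun h => hx (le_bot_iff.1 (h hi hj))
    exact hU ⟨hfin.toFinset, rfl⟩ (mem_complBotDiffIdeals.2 ⟨hx, fun i hi => by simpa using hi⟩)

theorem exists_isOpen_forall_finite_of_isOpen_setOf_mem
    [TopologicalSpace {U : Set X // IsOpen U}] [IsScott {U : Set X // IsOpen U} univ]
    (hmem : IsOpen {q : X × {U : Set X // IsOpen U} | q.1 ∈ q.2.val}) {x : X} (hx : x ≠ ⊥) :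
    ∃ V : Set X, IsOpen V ∧ x ∈ V ∧
      ∀ {ι : Type*} (a : ι → X), Pairwise (Disjoint on a) → {i | a i ∈ V}.Finite := by
  obtain ⟨V, W, hV, hW, hxV, hbotW, hVW⟩ :=
    isOpen_prod_iff.1 hmem x ⟨{⊥}ᶜ, isOpen_compl_singleton_bot⟩ hx
  refine ⟨V, hV, hxV, fun a ha => ?_⟩
  obtain ⟨s, hs⟩ := exists_mem_of_isOpen_of_isLUB_range hW
    (monotone_complBotDiffIdeals ha).directed_le (isLUB_range_complBotDiffIdeals ha) hbotW
  refine s.finite_toSet.subset fun i hi => ?_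
  have hai : a i ∈ (complBotDiffIdeals ha s).val := hVW (mk_mem_prod hi hs)
  exact (mem_complBotDiffIdeals.1 hai).2 i le_rfl

end ScottTopology

/-- `pair` presents the bounded poset `X` as `{⊥} ∪ (ℕ × (ℕ ∪ {ω})) ∪ {⊤}` with the order of the
poset `X₁`. Abstracting from the carrier keeps this order apart from the one that
`WithBot (WithTop (ℕ × ℕ∞))` has by default. -/
structure IsModJohnstone_s16 {X : Type*} [PartialOrder X] [BoundedOrder X] (pair : ℕ → ℕ∞ → X) :
    Prop where
  eq_bot_or_eq_top_or_eq_pair : ∀ x, x = ⊥ ∨ x = ⊤ ∨ ∃ i q, x = pair i q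
  pair_le_pair_iff : ∀ i j q r, pair i q ≤ pair j r ↔ (i = j ∧ q ≤ r) ∨ (i ≤ j ∧ r = ⊤)

namespace IsModJohnstone_s16

open Function Set Filter Topology

variable {X : Type*} [PartialOrder X] [BoundedOrder X] {pair : ℕ → ℕ∞ → X}

theorem pair_ne_bot (h : IsModJohnstone_s16 pair) (i : ℕ) (q : ℕ∞) : pair i q ≠ ⊥ := by
  intro hbot
  have hle : pair i q ≤ pair (i + 1) 0 := hbot.trans_le bot_le
  simp [h.pair_le_pair_iff] at hle

theorem pair_natCast_ne_top (h : IsModJohnstone_s16 pair) (i n : ℕ) : pair i n ≠ ⊤ := by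
  intro htop
  have hle : pair (i + 1) 0 ≤ pair i n := le_top.trans_eq htop.symm
  simp [h.pair_le_pair_iff] at hle

theorem monotone_pair (h : IsModJohnstone_s16 pair) (i : ℕ) : Monotone (pair i) :=
  fun q r hqr => (h.pair_le_pair_iff i i q r).2 (.inl ⟨rfl, hqr⟩)

theorem monotone_pair_top (h : IsModJohnstone_s16 pair) : Monotone fun i => pair i ⊤ :=
  fun i j hij => (h.pair_le_pair_iff i j ⊤ ⊤).2 (.inr ⟨hij, rfl⟩)

theorem disjoint_pair_natCast (h : IsModJohnstone_s16 pair) {i j : ℕ} (hij : i ≠ j) (m n : ℕ) :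
    Disjoint (pair i m) (pair j n) := by
  intro x hxi hxj
  rcases h.eq_bot_or_eq_top_or_eq_pair x with rfl | rfl | ⟨k, q, rfl⟩
  · exact le_rfl
  · exact absurd (top_le_iff.1 hxi) (h.pair_natCast_ne_top i m)
  · simp only [h.pair_le_pair_iff, ENat.natCast_ne_top, and_false, or_false] at hxi hxj
    exact absurd (hxi.1.symm.trans hxj.1) hij

theorem isLUB_range_pair_top (h : IsModJohnstone_s16 pair) : IsLUB (range fun i => pair i ⊤) ⊤ := by
  refine ⟨fun _ _ => le_top, fun b hb => ?_⟩
  have hle (i : ℕ) : pair i ⊤ ≤ b := hb ⟨i, rfl⟩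
  rcases h.eq_bot_or_eq_top_or_eq_pair b with rfl | rfl | ⟨k, q, rfl⟩
  · exact absurd (le_bot_iff.1 (hle 0)) (h.pair_ne_bot 0 ⊤)
  · exact le_rfl
  · have hle_succ := hle (k + 1)
    simp [h.pair_le_pair_iff] at hle_succ

theorem isLUB_range_pair_natCast (h : IsModJohnstone_s16 pair) (i : ℕ) :
    IsLUB (range fun n : ℕ => pair i n) (pair i ⊤) := by
  refine ⟨?_, fun b hb => ?_⟩
  · rintro _ ⟨n, rfl⟩
    exact h.monotone_pair i le_top
  have hle (n : ℕ) : pair i n ≤ b := hb ⟨n, rfl⟩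
  rcases h.eq_bot_or_eq_top_or_eq_pair b with rfl | rfl | ⟨k, q, rfl⟩
  · exact absurd (le_bot_iff.1 (hle 0)) (h.pair_ne_bot i 0)
  · exact le_top
  · simp only [h.pair_le_pair_iff] at hle ⊢
    have hik : i ≤ k := (hle 0).elim (fun hk => hk.1.le) And.left
    refine .inr ⟨hik, ?_⟩
    by_contra hq
    have hnq (n : ℕ) : (n : ℕ∞) ≤ q := ((hle n).resolve_right fun hk => hq hk.2).2
    exact hq (ENat.eq_top_iff_forall_ge.2 hnq)

variable [TopologicalSpace X] [IsScott X univ]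

theorem eventually_exists_pair_natCast_mem (h : IsModJohnstone_s16 pair) {V : Set X} (hV : IsOpen V)
    (htop : ⊤ ∈ V) : ∀ᶠ i in atTop, ∃ n : ℕ, pair i n ∈ V := by
  obtain ⟨k, hk⟩ := exists_mem_of_isOpen_of_isLUB_range hV h.monotone_pair_top.directed_le
    h.isLUB_range_pair_top htop
  filter_upwards [eventually_ge_atTop k] with i hki
  have hi : pair i ⊤ ∈ V :=
    IsScott.isUpperSet_of_isOpen (D := univ) hV (h.monotone_pair_top hki) hk
  exact exists_mem_of_isOpen_of_isLUB_range hV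
    ((h.monotone_pair i).comp Nat.mono_cast).directed_le (h.isLUB_range_pair_natCast i) hi

theorem not_isOpen_setOf_mem (h : IsModJohnstone_s16 pair)
    [TopologicalSpace {U : Set X // IsOpen U}] [IsScott {U : Set X // IsOpen U} univ] :
    ¬ IsOpen {q : X × {U : Set X // IsOpen U} | q.1 ∈ q.2.val} := by
  intro hmem
  have htop_ne_bot : (⊤ : X) ≠ ⊥ :=
    fun heq => h.pair_ne_bot 0 0 (le_bot_iff.1 (le_top.trans_eq heq))
  obtain ⟨V, hV, htop, hfin⟩ := exists_isOpen_forall_finite_of_isOpen_setOf_mem hmem htop_ne_bot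
  obtain ⟨f, hf⟩ := (h.eventually_exists_pair_natCast_mem hV htop).choice
  have hdisj : Pairwise (Disjoint on fun i => pair i (f i)) :=
    fun i j hij => h.disjoint_pair_natCast hij (f i) (f j)
  exact Nat.frequently_atTop_iff_infinite.1 hf.frequently (hfin _ hdisj)

end IsModJohnstone_s16

/-- Let `X₁ = {⊥} ∪ (ℕ × (ℕ ∪ {ω})) ∪ {⊤}` with the partial order characterized by: `⊥ ≤ x`
and `x ≤ ⊤` for all `x`, and `(i, p) ≤ (j, q)` iff (`i = j` and `p ≤ q`) or (`i ≤ j` and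
`q = ω`). Let `X₂` be the collection of all Scott open subsets of `X₁`, partially ordered by
set-theoretic inclusion. Then the set `E = {(x₁, x₂) : x₁ ∈ x₂}` is not open in the product
topology on `X₁ × X₂` of the Scott topology on `X₁` and the Scott topology on `X₂`. -/
theorem stmt_16 (p : PartialOrder ModJohnstone)
    (hbot : ∀ x : ModJohnstone, p.le ModJohnstone.bot x)
    (htop : ∀ x : ModJohnstone, p.le x ModJohnstone.top)
    (hpair : ∀ (i j : ℕ) (q r : ℕ∞),
      p.le (ModJohnstone.pair i q) (ModJohnstone.pair j r) ↔
        ((i = j ∧ q ≤ r) ∨ (i ≤ j ∧ r = ⊤))) :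
    ¬ (@instTopologicalSpaceProd ModJohnstone
        {U : Set ModJohnstone // (@Topology.scott ModJohnstone Set.univ p.toPreorder).IsOpen U}
        (@Topology.scott ModJohnstone Set.univ p.toPreorder)
        (Topology.scott
          {U : Set ModJohnstone // (@Topology.scott ModJohnstone Set.univ p.toPreorder).IsOpen U}
          Set.univ)).IsOpen
      {q : ModJohnstone ×
          {U : Set ModJohnstone // (@Topology.scott ModJohnstone Set.univ p.toPreorder).IsOpen U} |
        q.1 ∈ q.2.val} := by
  -- `WithBot` has an order of its own; `p` takes precedence only as a local instance of each class.
  let : LE ModJohnstone := p.toLE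
  let : Preorder ModJohnstone := p.toPreorder
  let : BoundedOrder ModJohnstone :=
    { top := ModJohnstone.top, le_top := htop, bot := ModJohnstone.bot, bot_le := hbot }
  have hcases (x : ModJohnstone) : x = ⊥ ∨ x = ⊤ ∨ ∃ i q, x = ModJohnstone.pair i q := by
    rcases x with _ | _ | ⟨i, q⟩
    exacts [.inl rfl, .inr (.inl rfl), .inr (.inr ⟨i, q, rfl⟩)]
  have h : IsModJohnstone_s16 ModJohnstone.pair := ⟨hcases, hpair⟩
  let : TopologicalSpace ModJohnstone := Topology.scott ModJohnstone Set.univ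
  have : Topology.IsScott ModJohnstone Set.univ := ⟨rfl⟩
  let : TopologicalSpace {U : Set ModJohnstone // IsOpen U} := Topology.scott _ Set.univ
  have : Topology.IsScott {U : Set ModJohnstone // IsOpen U} Set.univ := ⟨rfl⟩
  exact h.not_isOpen_setOf_mem
end
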